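/- arXiv:2407.17147 — 2 statements merged into one kernel-verified Lean document; each statement's English description precedes it below -/
import Mathlib

section
/- Let Q be a finite acyclic quiver and Λ an Artin algebra. The composite mono(Q,Λ) → rep(Q, mod Λ) → rep(Q, stable-mod Λ) induces a functor Φ from the injectively stable category of mono(Q,Λ) to rep(Q, stable-mod Λ), and Φ is an epivalence (a full and dense functor which reflects isomorphisms). Moreover, if Q has at least one arrow, then Φ is an equivalence if and only if Λ has global dimension at most 1. -/
/-! Basic framework: representations of a quiver over a ring. -/

namespace QuivRep

/-- A representation of a quiver `V` over a ring `Λ`. -/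
structure Repn (Λ : Type) [Ring Λ] (V : Type) [Quiver.{1} V] where
  M : V → Type
  [acg : ∀ i, AddCommGroup (M i)]
  [mod : ∀ i, Module Λ (M i)]
  h : ∀ {i j : V}, (i ⟶ j) → (M i →ₗ[Λ] M j)

attribute [instance] Repn.acg Repn.mod

variable {Λ : Type} [Ring Λ] {V : Type} [Quiver.{1} V]

/-- A morphism of representations. -/
@[ext]
structure RepHom (X Y : Repn Λ V) where
  app : ∀ i, X.M i →ₗ[Λ] Y.M i
  comm : ∀ {i j : V} (a : i ⟶ j), (Y.h a).comp (app i) = (app j).comp (X.h a)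

namespace RepHom

def id (X : Repn Λ V) : RepHom X X :=
  ⟨fun _ => LinearMap.id, fun _ => rfl⟩

def comp {X Y Z : Repn Λ V} (g : RepHom Y Z) (f : RepHom X Y) : RepHom X Z :=
  ⟨fun i => (g.app i).comp (f.app i), fun a => by
    rw [← LinearMap.comp_assoc, g.comm a, LinearMap.comp_assoc, f.comm a,
      LinearMap.comp_assoc]⟩

instance (X Y : Repn Λ V) : Zero (RepHom X Y) :=
  ⟨⟨fun _ => 0, fun a => by simp⟩⟩

end RepHom

/-- Isomorphism of representations. -/
def RepIso (X Y : Repn Λ V) : Prop :=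
  ∃ (f : RepHom X Y) (g : RepHom Y X), g.comp f = RepHom.id X ∧ f.comp g = RepHom.id Y

/-- The zero representation predicate. -/
def Repn.IsZero (X : Repn Λ V) : Prop := ∀ i, Subsingleton (X.M i)

/-- Indecomposability, via idempotent endomorphisms. -/
def Repn.Indec (X : Repn Λ V) : Prop :=
  ¬ X.IsZero ∧ ∀ e : RepHom X X, e.comp e = e → e = RepHom.id X ∨ e = 0

/-- Finitely generated (pointwise) representations. -/
def Repn.FG (X : Repn Λ V) : Prop := ∀ i, Module.Finite Λ (X.M i)

variable [Fintype V] [∀ i j : V, Fintype (i ⟶ j)]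

/-- The canonical map `⊕_{α : t(α) = i} M_{s(α)} → M_i` of a representation. -/
noncomputable def Repn.inMap (X : Repn Λ V) (i : V) :
    ((a : Σ j : V, j ⟶ i) → X.M a.1) →ₗ[Λ] X.M i :=
  ∑ a : (Σ j : V, j ⟶ i), (X.h a.2).comp (LinearMap.proj a)

/-- The (separated) monomorphism condition. -/
def Repn.IsMonoRep (X : Repn Λ V) : Prop := ∀ i : V, Function.Injective (X.inMap i)

/-- A quiver is acyclic if it has no nontrivial cycles. -/
def IsAcyclic (V : Type) [Quiver.{1} V] : Prop :=
  ∀ (i : V) (p : Quiver.Path i i), p = Quiver.Path.nil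

/-- `f, g` form a short exact sequence of representations (computed vertexwise). -/
def IsSES {X Y Z : Repn Λ V} (f : RepHom X Y) (g : RepHom Y Z) : Prop :=
  (∀ i, Function.Injective (f.app i)) ∧ (∀ i, Function.Surjective (g.app i)) ∧
    (∀ i, LinearMap.range (f.app i) = LinearMap.ker (g.app i))

end QuivRep

namespace QuivRep

variable {Λ : Type} [Ring Λ] {V : Type} [Quiver.{1} V]

/-- A linear map factors through an injective `Λ`-module. -/
def FactorsThroughInj (Λ : Type) [Ring Λ] {A B : Type} [AddCommGroup A] [Module Λ A]
    [AddCommGroup B] [Module Λ B] (f : A →ₗ[Λ] B) : Prop :=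
  ∃ (J : ModuleCat.{0} Λ), Module.Injective Λ J ∧
    ∃ (u : A →ₗ[Λ] J) (v : J →ₗ[Λ] B), v.comp u = f

/-- Equality in the injectively stable category `stable-mod Λ`. -/
def StEq (Λ : Type) [Ring Λ] {A B : Type} [AddCommGroup A] [Module Λ A]
    [AddCommGroup B] [Module Λ B] (f g : A →ₗ[Λ] B) : Prop :=
  FactorsThroughInj Λ (f - g)

/-- A morphism in `rep(Q, stable-mod Λ)` between (the images of) two representations:
a family of morphisms in `stable-mod Λ` making all arrow squares commute in `stable-mod Λ`. -/
def StRepHom (X Y : Repn Λ V) :=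
  { φ : ∀ i, X.M i →ₗ[Λ] Y.M i //
    ∀ (i j : V) (a : i ⟶ j), StEq Λ ((Y.h a).comp (φ i)) ((φ j).comp (X.h a)) }

/-- Two families are equal as morphisms of `rep(Q, stable-mod Λ)`. -/
def StFamEq {X Y : Repn Λ V} (φ ψ : ∀ i, X.M i →ₗ[Λ] Y.M i) : Prop :=
  ∀ i, StEq Λ (φ i) (ψ i)

/-- `X` and `Y` become isomorphic in `rep(Q, stable-mod Λ)`. -/
def StRepIso (X Y : Repn Λ V) : Prop :=
  ∃ (φ : StRepHom X Y) (ψ : StRepHom Y X),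
    (∀ i, StEq Λ ((ψ.1 i).comp (φ.1 i)) LinearMap.id) ∧
    (∀ i, StEq Λ ((φ.1 i).comp (ψ.1 i)) LinearMap.id)

variable [Fintype V] [∀ i j : V, Fintype (i ⟶ j)]

def Repn.InMono (X : Repn Λ V) : Prop := X.FG ∧ X.IsMonoRep

def IsSplitMono {X Y : Repn Λ V} (f : RepHom X Y) : Prop :=
  ∃ r : RepHom Y X, r.comp f = RepHom.id X

/-- `X` is an injective object of `mono(Q,Λ)`. -/
def InjInMono (X : Repn Λ V) : Prop :=
  ∀ (E N : Repn Λ V), N.InMono →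
    ∀ (f : RepHom X E) (g : RepHom E N), IsSES f g → IsSplitMono f

/-- `f` and `g` are equal in the injectively stable category of `mono(Q,Λ)`, i.e. their
difference factors through an injective object of `mono(Q,Λ)`. -/
def MonoStEq {X Y : Repn Λ V} (f g : RepHom X Y) : Prop :=
  ∃ (Z : Repn Λ V), Z.InMono ∧ InjInMono Z ∧
    ∃ (u : RepHom X Z) (v : RepHom Z Y),
      ∀ i, (v.comp u).app i = f.app i - g.app i

/-- Fullness of the functor `Φ : stable-mono(Q,Λ) → rep(Q, stable-mod Λ)`. -/
def PhiFull (Λ : Type) [Ring Λ] (V : Type) [Quiver.{1} V] [Fintype V]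
    [∀ i j : V, Fintype (i ⟶ j)] : Prop :=
  ∀ X Y : Repn Λ V, X.InMono → Y.InMono → ∀ φ : StRepHom X Y,
    ∃ f : RepHom X Y, StFamEq (fun i => f.app i) φ.1

/-- Density (essential surjectivity) of `Φ`. -/
def PhiDense (Λ : Type) [Ring Λ] (V : Type) [Quiver.{1} V] [Fintype V]
    [∀ i j : V, Fintype (i ⟶ j)] : Prop :=
  ∀ Z : Repn Λ V, Z.FG → ∃ X : Repn Λ V, X.InMono ∧ StRepIso Z X

/-- `Φ` reflects isomorphisms. -/
def PhiReflectsIsos (Λ : Type) [Ring Λ] (V : Type) [Quiver.{1} V] [Fintype V]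
    [∀ i j : V, Fintype (i ⟶ j)] : Prop :=
  ∀ X Y : Repn Λ V, X.InMono → Y.InMono → ∀ f : RepHom X Y,
    (∃ ψ : StRepHom Y X,
      (∀ i, StEq Λ ((ψ.1 i).comp (f.app i)) LinearMap.id) ∧
      (∀ i, StEq Λ ((f.app i).comp (ψ.1 i)) LinearMap.id)) →
    ∃ g : RepHom Y X, MonoStEq (g.comp f) (RepHom.id X) ∧ MonoStEq (f.comp g) (RepHom.id Y)

/-- Faithfulness of `Φ`. -/
def PhiFaithful (Λ : Type) [Ring Λ] (V : Type) [Quiver.{1} V] [Fintype V]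
    [∀ i j : V, Fintype (i ⟶ j)] : Prop :=
  ∀ X Y : Repn Λ V, X.InMono → Y.InMono → ∀ f g : RepHom X Y,
    StFamEq (fun i => f.app i) (fun i => g.app i) → MonoStEq f g

end QuivRep

/-! Along the acyclic order, a representation or a morphism is built one vertex at a time from its
canonical maps `⊕_{t(α) = i} M_{s(α)} → M_i`. In `mono(Q,Λ)` these maps are monomorphisms, so
anything with values in injective modules extends along them. Hence a stable morphism can be
corrected, vertex by vertex, to a strict one, and `Φ` is full; likewise a representation in
`mono(Q,Λ)` with injective components is an injective object, and conversely.

For density, push a presentation `0 → K → F → Z → 0` with `F` free out along an inflation `K → W`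
into an object with injective components: the pushout lies in `mono(Q,Λ)`, and its projection to
`Z` has kernel `W`, so it is a stable isomorphism. If `f : X → Y` is a stable isomorphism at each
vertex and `u : X → W` is such an inflation of `X`, then the cokernel of `(f, u) : X → Y ⊕ W` has
injective components, so the sequence splits and exhibits an inverse of `f` up to injective objects.

If `Λ` is hereditary, then images of injective modules are injective, so every finitely generated
module has a largest injective submodule, through which stably trivial maps factor functorially:
`Φ` is faithful. Conversely, let `a : i → j` be an arrow into a sink, `E` an injective module and
`K` a submodule of `E`. There is an object of `mono(Q,Λ)` whose top at `j` has `E/K` as a direct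
summand, such that the resulting morphism to the skyscraper with value `E/K` at `j` is stably
trivial at each vertex. If `Φ` is faithful, this morphism factors through an injective object, whose
top at `j` is injective, and so `E/K` is injective. It follows that left ideals are projective.
-/

namespace QuivRep

section Module

variable {Λ : Type} [Ring Λ]

theorem exists_injective_embedding (A : Type) [AddCommGroup A] [Module Λ A] :
    ∃ (J : ModuleCat.{0} Λ) (u : A →ₗ[Λ] J), Module.Injective Λ J ∧ Function.Injective u := by
  obtain ⟨P⟩ := CategoryTheory.EnoughInjectives.presentation (ModuleCat.of Λ A)
  have := P.injective
  exact ⟨P.J, P.f.hom, Module.injective_module_of_injective_object _ _,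
    (ModuleCat.mono_iff_injective P.f).1 P.mono⟩

theorem injective_of_retract {A B : Type*} [AddCommGroup A] [Module Λ A] [AddCommGroup B]
    [Module Λ B] [Module.Injective Λ B] (s : A →ₗ[Λ] B) (r : B →ₗ[Λ] A)
    (hrs : r ∘ₗ s = LinearMap.id) : Module.Injective Λ A := by
  refine ⟨fun X Y _ _ _ _ f hf g => ?_⟩
  obtain ⟨k, hk⟩ := Module.Injective.extension_property Λ B X Y f hf (s ∘ₗ g)
  have hrk : (r ∘ₗ k) ∘ₗ f = g := by
    rw [LinearMap.comp_assoc, hk, ← LinearMap.comp_assoc, hrs, LinearMap.id_comp]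
  exact ⟨r ∘ₗ k, LinearMap.congr_fun hrk⟩

theorem injective_of_subsingleton (A : Type*) [AddCommGroup A] [Module Λ A] [Subsingleton A] :
    Module.Injective Λ A :=
  ⟨fun _ _ _ _ _ _ _ _ _ => ⟨0, fun _ => Subsingleton.elim _ _⟩⟩

instance injective_prod {A B : Type*} [AddCommGroup A] [Module Λ A] [AddCommGroup B] [Module Λ B]
    [Module.Injective Λ A] [Module.Injective Λ B] : Module.Injective Λ (A × B) := by
  refine ⟨fun X Y _ _ _ _ f hf g => ?_⟩
  obtain ⟨k, hk⟩ :=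
    Module.Injective.extension_property Λ A X Y f hf (LinearMap.fst Λ A B ∘ₗ g)
  obtain ⟨l, hl⟩ :=
    Module.Injective.extension_property Λ B X Y f hf (LinearMap.snd Λ A B ∘ₗ g)
  exact ⟨k.prod l, fun x => Prod.ext (LinearMap.congr_fun hk x) (LinearMap.congr_fun hl x)⟩

theorem exists_comp_eq_of_ker_le {A B C : Type*} [AddCommGroup A] [Module Λ A] [AddCommGroup B]
    [Module Λ B] [AddCommGroup C] [Module Λ C] {g : A →ₗ[Λ] B} (hg : Function.Surjective g)
    (f : A →ₗ[Λ] C) (hgf : LinearMap.ker g ≤ LinearMap.ker f) : ∃ w : B →ₗ[Λ] C, w ∘ₗ g = f := by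
  refine ⟨(LinearMap.ker g).liftQ f hgf ∘ₗ (g.quotKerEquivOfSurjective hg).symm.toLinearMap, ?_⟩
  ext x
  have hx : (g.quotKerEquivOfSurjective hg).symm (g x) = (LinearMap.ker g).mkQ x :=
    (LinearEquiv.symm_apply_eq _).2 rfl
  simp [hx]

theorem exists_comp_eq_of_range_le {A B C : Type*} [AddCommGroup A] [Module Λ A]
    [AddCommGroup B] [Module Λ B] [AddCommGroup C] [Module Λ C] {u : A →ₗ[Λ] B}
    (hu : Function.Injective u) (f : C →ₗ[Λ] B) (hf : LinearMap.range f ≤ LinearMap.range u) :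
    ∃ s : C →ₗ[Λ] A, u ∘ₗ s = f := by
  let f' : C →ₗ[Λ] LinearMap.range u := f.codRestrict _ fun x => hf ⟨x, rfl⟩
  refine ⟨(LinearEquiv.ofInjective u hu).symm.toLinearMap ∘ₗ f', LinearMap.ext fun x => ?_⟩
  exact congrArg Subtype.val ((LinearEquiv.ofInjective u hu).apply_symm_apply (f' x))

end Module

section FactorsThroughInj

variable {Λ : Type} [Ring Λ] {A B C : Type} [AddCommGroup A] [Module Λ A]
  [AddCommGroup B] [Module Λ B] [AddCommGroup C] [Module Λ C]

theorem FactorsThroughInj.of_injective {J : Type*} [AddCommGroup J] [Module Λ J]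
    [Module.Injective Λ J] (u : A →ₗ[Λ] J) (v : J →ₗ[Λ] B) : FactorsThroughInj Λ (v ∘ₗ u) := by
  obtain ⟨I, i, hI, hi⟩ := exists_injective_embedding (Λ := Λ) A
  obtain ⟨k, rfl⟩ := Module.Injective.extension_property Λ J A I i hi u
  exact ⟨I, hI, i, v ∘ₗ k, rfl⟩

theorem FactorsThroughInj.zero : FactorsThroughInj Λ (0 : A →ₗ[Λ] B) :=
  ⟨ModuleCat.of Λ PUnit, injective_of_subsingleton PUnit, 0, 0, rfl⟩

theorem FactorsThroughInj.add {f g : A →ₗ[Λ] B} (hf : FactorsThroughInj Λ f)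
    (hg : FactorsThroughInj Λ g) : FactorsThroughInj Λ (f + g) := by
  obtain ⟨I, hI, u, v, rfl⟩ := hf
  obtain ⟨J, hJ, u', v', rfl⟩ := hg
  have huv : v ∘ₗ u + v' ∘ₗ u' = v.coprod v' ∘ₗ u.prod u' := by ext; simp
  rw [huv]
  exact FactorsThroughInj.of_injective _ _

theorem FactorsThroughInj.neg {f : A →ₗ[Λ] B} (hf : FactorsThroughInj Λ f) :
    FactorsThroughInj Λ (-f) := by
  obtain ⟨J, hJ, u, v, rfl⟩ := hf
  exact ⟨J, hJ, u, -v, LinearMap.neg_comp u v⟩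

theorem FactorsThroughInj.sub {f g : A →ₗ[Λ] B} (hf : FactorsThroughInj Λ f)
    (hg : FactorsThroughInj Λ g) : FactorsThroughInj Λ (f - g) :=
  sub_eq_add_neg f g ▸ hf.add hg.neg

theorem FactorsThroughInj.comp_left {f : A →ₗ[Λ] B} (hf : FactorsThroughInj Λ f)
    (g : B →ₗ[Λ] C) : FactorsThroughInj Λ (g ∘ₗ f) := by
  obtain ⟨J, hJ, u, v, rfl⟩ := hf
  exact ⟨J, hJ, u, g ∘ₗ v, rfl⟩

theorem FactorsThroughInj.comp_right {f : B →ₗ[Λ] C} (hf : FactorsThroughInj Λ f)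
    (g : A →ₗ[Λ] B) : FactorsThroughInj Λ (f ∘ₗ g) := by
  obtain ⟨J, hJ, u, v, rfl⟩ := hf
  exact ⟨J, hJ, u ∘ₗ g, v, rfl⟩

theorem FactorsThroughInj.exists_extension {ι : Type*} [Fintype ι] {M : ι → Type}
    [∀ a, AddCommGroup (M a)] [∀ a, Module Λ (M a)] {m : (∀ a, M a) →ₗ[Λ] A}
    (hm : Function.Injective m) {δ : ∀ a, M a →ₗ[Λ] B} (hδ : ∀ a, FactorsThroughInj Λ (δ a)) :
    ∃ f : A →ₗ[Λ] B, FactorsThroughInj Λ f ∧ ∀ y, f (m y) = ∑ a, δ a (y a) := by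
  choose J hJ u v huv using hδ
  obtain ⟨k, hk⟩ := Module.Injective.extension_property Λ (∀ a, J a) _ _ m hm
    (LinearMap.piMap u)
  refine ⟨(∑ a, v a ∘ₗ LinearMap.proj a) ∘ₗ k, FactorsThroughInj.of_injective _ _, fun y => ?_⟩
  have hky : k (m y) = LinearMap.piMap u y := LinearMap.congr_fun hk y
  simp [hky, ← huv]

theorem StEq.refl (f : A →ₗ[Λ] B) : StEq Λ f f := by
  rw [StEq, sub_self]
  exact FactorsThroughInj.zero

theorem StEq.symm {f g : A →ₗ[Λ] B} (h : StEq Λ f g) : StEq Λ g f := by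
  simpa only [StEq, neg_sub] using FactorsThroughInj.neg h

theorem StEq.trans {f g k : A →ₗ[Λ] B} (h : StEq Λ f g) (h' : StEq Λ g k) : StEq Λ f k := by
  simpa only [StEq, sub_add_sub_cancel] using FactorsThroughInj.add h h'

theorem StEq.comp_left {f g : A →ₗ[Λ] B} (h : StEq Λ f g) (k : B →ₗ[Λ] C) :
    StEq Λ (k ∘ₗ f) (k ∘ₗ g) := by
  simpa only [StEq, LinearMap.comp_sub] using FactorsThroughInj.comp_left h k

end FactorsThroughInj

section InjectiveHull

variable {Λ : Type} [Ring Λ] {I : Type*} [AddCommGroup I] [Module Λ I]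

/-- `E` is an essential extension of `N`, both being submodules of a fixed module. -/
def IsEssential (N E : Submodule Λ I) : Prop :=
  N ≤ E ∧ ∀ D ≤ E, Disjoint N D → D = ⊥

theorem exists_maximal_isEssential (N : Submodule Λ I) : ∃ E, Maximal (IsEssential N) E := by
  have hN : IsEssential N N := ⟨le_rfl, fun D hD hND => disjoint_self.1 (hND.mono_left hD)⟩
  suffices hchains : ∀ c ⊆ {E | IsEssential N E}, IsChain (· ≤ ·) c → ∀ F ∈ c,
      ∃ ub ∈ {E | IsEssential N E}, ∀ E ∈ c, E ≤ ub by
    obtain ⟨E, -, hE⟩ := zorn_le_nonempty₀ _ hchains N hN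
    exact ⟨E, hE⟩
  intro c hc hchain F hF
  refine ⟨sSup c, ⟨(hc hF).1.trans (le_sSup hF), fun D hD hND => ?_⟩, fun _ => le_sSup⟩
  rw [← inf_eq_left.2 hD, hchain.directedOn.inf_sSup_eq]
  simp only [iSup_eq_bot]
  exact fun E hE => (hc hE).2 _ inf_le_right (hND.mono_right inf_le_left)

theorem exists_maximal_disjoint (E : Submodule Λ I) : ∃ C, Maximal (Disjoint E) C := by
  obtain ⟨C, -, hC⟩ := zorn_le_nonempty₀ {C | Disjoint E C}
    (fun c hc hchain _ _ => ⟨sSup c, hchain.directedOn.disjoint_sSup_right.2 hc,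
      fun _ => le_sSup⟩) ⊥ disjoint_bot_right
  exact ⟨C, hC⟩

theorem injective_of_maximal_isEssential [Module.Injective Λ I] {N E : Submodule Λ I}
    (hE : Maximal (IsEssential N) E) : Module.Injective Λ E := by
  obtain ⟨C, hC⟩ := exists_maximal_disjoint E
  have hinj : Function.Injective (C.mkQ ∘ₗ E.subtype) := by
    rw [← LinearMap.ker_eq_bot, LinearMap.ker_comp, Submodule.ker_mkQ,
      ← Submodule.disjoint_iff_comap_eq_bot]
    exact hC.prop
  obtain ⟨q, hq⟩ := Module.Injective.extension_property Λ I _ _ _ hinj E.subtype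
  let p : I →ₗ[Λ] I := q ∘ₗ C.mkQ
  have hpE : ∀ x ∈ E, p x = x := fun x hx => LinearMap.congr_fun hq ⟨x, hx⟩
  have hCp : C ≤ LinearMap.ker p :=
    (Submodule.ker_mkQ C).symm.le.trans (LinearMap.ker_le_ker_comp _ _)
  have hE_le : E ≤ LinearMap.range p := fun x hx => ⟨x, hpE x hx⟩
  have hrange : IsEssential N (LinearMap.range p) := by
    refine ⟨hE.prop.1.trans hE_le, fun D hD hND => ?_⟩
    have hED : Disjoint E D := disjoint_iff.2
      (hE.prop.2 _ inf_le_left (hND.mono_right inf_le_right))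
    have hE_comap : Disjoint E (D.comap p) := Submodule.disjoint_def.2 fun x hx hxD =>
      Submodule.disjoint_def.1 hED x hx (hpE x hx ▸ hxD)
    have hcomap : D.comap p ≤ LinearMap.ker p :=
      (hC.le_of_ge hE_comap (hCp.trans (LinearMap.ker_le_comap p))).trans hCp
    rwa [← Submodule.map_comap_eq_of_le hD, eq_bot_iff, Submodule.map_le_iff_le_comap]
  have hp_mem : ∀ x, p x ∈ E := fun x => hE.le_of_ge hrange hE_le ⟨x, rfl⟩
  exact injective_of_retract E.subtype (p.codRestrict E hp_mem)
    (LinearMap.ext fun x => Subtype.ext (hpE x x.2))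

end InjectiveHull

section Artin

variable {R : Type*} [CommRing R] {Λ : Type*} [Ring Λ] [Algebra R Λ]
  {E : Type*} [AddCommGroup E] [Module R E] [Module Λ E] [IsScalarTower R Λ E]

theorem isNoetherian_linearMap_of_isSimpleModule [IsNoetherianRing R] {N : Submodule Λ E}
    [Module.Finite R N] (hN : ∀ D, Disjoint N D → D = ⊥) (S : Type*) [AddCommGroup S]
    [Module Λ S] [IsSimpleModule Λ S] : IsNoetherian R (S →ₗ[Λ] E) := by
  have := IsSimpleModule.nontrivial Λ S
  obtain ⟨s, hs⟩ := exists_ne (0 : S)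
  have hmem : ∀ φ : S →ₗ[Λ] E, φ s ∈ N := by
    intro φ
    rcases eq_bot_or_eq_top (N.comap φ) with h | h
    · have hdisj : Disjoint N (LinearMap.range φ) := by
        rw [disjoint_iff, inf_comm, ← Submodule.map_comap_eq, h, Submodule.map_bot]
      rw [LinearMap.range_eq_bot.1 (hN _ hdisj)]
      exact N.zero_mem
    · exact (h ▸ Submodule.mem_top : s ∈ N.comap φ)
  have : IsNoetherian R (N.restrictScalars R) := isNoetherian_of_isNoetherianRing_of_finite R N
  refine isNoetherian_of_injective
    ((LinearMap.applyₗ' R s).codRestrict (N.restrictScalars R) hmem)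
    ((injective_iff_map_eq_zero _).2 fun φ hφ => φ.injective_or_eq_zero.resolve_left fun hinj => ?_)
  exact hs (hinj ((congrArg Subtype.val hφ).trans φ.map_zero.symm))

theorem isNoetherian_linearMap_of_isFiniteLength [IsNoetherianRing R] {N : Submodule Λ E}
    [Module.Finite R N] (hN : ∀ D, Disjoint N D → D = ⊥) {M : Type*} [AddCommGroup M]
    [Module Λ M] (hM : IsFiniteLength Λ M) : IsNoetherian R (M →ₗ[Λ] E) := by
  induction hM with
  | of_subsingleton => infer_instance
  | @of_simple_quotient M _ _ L _ _ ih =>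
    have := isNoetherian_linearMap_of_isSimpleModule (R := R) hN (M ⧸ L)
    refine isNoetherian_of_range_eq_ker (LinearMap.lcomp R E L.mkQ)
      (LinearMap.lcomp R E L.subtype) (le_antisymm ?_ fun φ hφ => ?_)
    · rintro _ ⟨ψ, rfl⟩
      exact LinearMap.ext fun x => by
        simp [(Submodule.Quotient.mk_eq_zero L).2 x.2]
    · have hL : L ≤ LinearMap.ker φ := fun x hx => LinearMap.congr_fun hφ ⟨x, hx⟩
      exact ⟨L.liftQ φ hL, L.liftQ_mkQ φ hL⟩

theorem isNoetherian_of_essential [IsNoetherianRing R] {N : Submodule Λ E}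
    [Module.Finite R N] (hN : ∀ D, Disjoint N D → D = ⊥) (hΛ : IsFiniteLength Λ Λ) :
    IsNoetherian R E :=
  have := isNoetherian_linearMap_of_isFiniteLength (R := R) hN hΛ
  isNoetherian_of_linearEquiv (LinearMap.ringLmapEquivSelf Λ R E)

end Artin

section EnoughInjectives

/-- The category of finitely generated `Λ`-modules has enough injectives which are injective among
all modules, so that injective objects of `mono(Q,Λ)` can be found with finitely generated
components. -/
def HasEnoughFGInjectives (Λ : Type) [Ring Λ] : Prop :=
  ∀ (A : Type) [AddCommGroup A] [Module Λ A], Module.Finite Λ A →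
    ∃ (E : ModuleCat.{0} Λ) (u : A →ₗ[Λ] E), Module.Injective Λ E ∧ Module.Finite Λ E ∧
      Function.Injective u

theorem hasEnoughFGInjectives_of_isArtinianRing (R : Type) [CommRing R] [IsArtinianRing R]
    (Λ : Type) [Ring Λ] [Algebra R Λ] [Module.Finite R Λ] : HasEnoughFGInjectives Λ := by
  intro A _ _ _
  obtain ⟨I, u, _, hu⟩ := exists_injective_embedding (Λ := Λ) A
  obtain ⟨E, hE⟩ := exists_maximal_isEssential (LinearMap.range u)
  have := injective_of_maximal_isEssential hE
  let u' : A →ₗ[Λ] E := u.codRestrict E fun x => hE.prop.1 ⟨x, rfl⟩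
  have hN : ∀ D, Disjoint (LinearMap.range u') D → D = ⊥ := by
    intro D hD
    have hdisj : Disjoint (LinearMap.range u) (D.map E.subtype) := by
      rw [← LinearMap.subtype_comp_codRestrict u E fun x => hE.prop.1 ⟨x, rfl⟩,
        LinearMap.range_comp]
      exact Submodule.disjoint_map E.subtype_injective hD
    exact Submodule.map_injective_of_injective E.subtype_injective
      ((hE.prop.2 _ (Submodule.map_subtype_le E D) hdisj).trans (Submodule.map_bot _).symm)
  let : Module R E := Module.compHom E (algebraMap R Λ)
  have : IsScalarTower R Λ E := IsScalarTower.of_algebraMap_smul fun _ _ => rfl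
  have : Module.Finite R (LinearMap.range u') := Module.Finite.trans Λ _
  have : IsArtinianRing Λ := IsArtinianRing.of_finite R Λ
  have hΛ : IsFiniteLength Λ Λ :=
    isFiniteLength_iff_isNoetherian_isArtinian.2 ⟨inferInstance, inferInstance⟩
  have : IsNoetherian R E := isNoetherian_of_essential (R := R) hN hΛ
  exact ⟨ModuleCat.of Λ E, u', inferInstance,
    Module.Finite.of_restrictScalars_finite R Λ E, fun x y h => hu (congrArg Subtype.val h)⟩

end EnoughInjectives

section Hereditary

variable {Λ : Type} [Ring Λ]

theorem injective_of_surjective (hΛ : ∀ I : Submodule Λ Λ, Module.Projective Λ I)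
    {A B : Type*} [AddCommGroup A] [Module Λ A] [AddCommGroup B] [Module Λ B]
    [Module.Injective Λ A] {q : A →ₗ[Λ] B} (hq : Function.Surjective q) :
    Module.Injective Λ B := by
  refine Module.Baer.injective fun I g => ?_
  have := hΛ I
  obtain ⟨k, rfl⟩ := Module.projective_lifting_property q g hq
  obtain ⟨l, hl⟩ := Module.Baer.of_injective ‹Module.Injective Λ A› I k
  exact ⟨q ∘ₗ l, fun x hx => congrArg q (hl x hx)⟩

theorem projective_of_quotients_injective (hΛ : HasEnoughFGInjectives Λ)
    (hquot : ∀ (E : Type) [AddCommGroup E] [Module Λ E] [Module.Injective Λ E]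
      [Module.Finite Λ E] (K : Submodule Λ E), Module.Injective Λ (E ⧸ K))
    {P : Type*} [AddCommGroup P] [Module Λ P] [Module.Projective Λ P] (I : Submodule Λ P)
    [Module.Finite Λ I] : Module.Projective Λ I := by
  obtain ⟨n, q, hq⟩ := Module.Finite.exists_fin' Λ I
  obtain ⟨E, u, _, _, hu⟩ := hΛ (Fin n → Λ) inferInstance
  let K : Submodule Λ E := (LinearMap.ker q).map u
  have := hquot E K
  obtain ⟨w, hw⟩ : ∃ w : I →ₗ[Λ] E ⧸ K, w ∘ₗ q = K.mkQ ∘ₗ u := by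
    refine exists_comp_eq_of_ker_le hq _ ?_
    rw [LinearMap.ker_comp, Submodule.ker_mkQ]
    exact Submodule.le_comap_map u _
  obtain ⟨w', hw'⟩ := Module.Injective.extension_property Λ (E ⧸ K) _ _ I.subtype
    I.subtype_injective w
  obtain ⟨l, hl⟩ := Module.projective_lifting_property K.mkQ w' K.mkQ_surjective
  have hlq : ∀ y, ∃ z ∈ LinearMap.ker q, u z = l (q y) - u y := fun y => by
    rw [← Submodule.mem_map, ← Submodule.Quotient.eq]
    have hlw : K.mkQ (l (q y)) = w (q y) := by
      rw [← hw', LinearMap.comp_apply, ← hl]; rfl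
    exact hlw.trans (LinearMap.congr_fun hw y)
  have hl_range : LinearMap.range (l ∘ₗ I.subtype) ≤ LinearMap.range u := by
    rintro _ ⟨x, rfl⟩
    obtain ⟨y, rfl⟩ := hq x
    obtain ⟨z, -, hz⟩ := hlq y
    exact ⟨z + y, by simp [hz]⟩
  obtain ⟨s, hus⟩ := exists_comp_eq_of_range_le hu _ hl_range
  refine Module.Projective.of_split s q (LinearMap.ext fun x => ?_)
  obtain ⟨y, rfl⟩ := hq x
  obtain ⟨z, hz, huz⟩ := hlq y
  have hs : s (q y) = z + y := hu <| by
    rw [map_add, huz, sub_add_cancel]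
    exact LinearMap.congr_fun hus (q y)
  simp [hs, LinearMap.mem_ker.1 hz]

end Hereditary

section Acyclic

variable {V : Type} [Quiver.{1} V]

theorem IsAcyclic.isStrictOrder_path (hV : IsAcyclic V) :
    IsStrictOrder V fun j i => ∃ p : Quiver.Path j i, 0 < p.length where
  irrefl i := fun ⟨p, hp⟩ => by simp [hV i p] at hp
  trans _ _ _ := fun ⟨p, hp⟩ ⟨q, _⟩ => ⟨p.comp q, by rw [Quiver.Path.length_comp]; omega⟩

theorem IsAcyclic.wellFounded_hom [Finite V] (hV : IsAcyclic V) :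
    WellFounded fun j i : V => Nonempty (j ⟶ i) :=
  have := hV.isStrictOrder_path
  Subrelation.wf (fun ⟨a⟩ => ⟨a.toPath, by simp⟩) (Finite.wellFounded_of_trans_of_irrefl
    fun j i : V => ∃ p : Quiver.Path j i, 0 < p.length)

theorem IsAcyclic.exists_hom_sink [Finite V] (hV : IsAcyclic V)
    (hne : ∃ i j : V, Nonempty (i ⟶ j)) :
    ∃ i j : V, Nonempty (i ⟶ j) ∧ ∀ k, IsEmpty (j ⟶ k) := by
  have := hV.isStrictOrder_path
  have hwf := Finite.wellFounded_of_trans_of_irrefl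
    (Function.swap fun j i : V => ∃ p : Quiver.Path j i, 0 < p.length)
  obtain ⟨i, j, hij⟩ := hne
  obtain ⟨j, ⟨i, hij⟩, hj⟩ := hwf.has_min {j | ∃ i : V, Nonempty (i ⟶ j)} ⟨j, i, hij⟩
  exact ⟨i, j, hij, fun k => ⟨fun a => hj k ⟨j, ⟨a⟩⟩ ⟨a.toPath, by simp⟩⟩⟩

theorem exists_forall_of_wellFounded {ι : Type*} {r : ι → ι → Prop} (hr : WellFounded r)
    {A : ι → Type*} (P : ∀ i, (∀ j, r j i → A j) → A i → Prop)
    (hP : ∀ i prev, ∃ x, P i prev x) : ∃ f : ∀ i, A i, ∀ i, P i (fun j _ => f j) (f i) := by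
  choose F hF using hP
  refine ⟨hr.fix F, fun i => ?_⟩
  have h := hF i fun j _ => hr.fix F j
  rwa [← hr.fix_eq F i] at h

end Acyclic

section InMap

variable {Λ : Type} [Ring Λ] {V : Type} [Quiver.{1} V]

theorem RepHom.app_h {X Y : Repn Λ V} (f : RepHom X Y) {i j : V} (a : i ⟶ j) (x : X.M i) :
    f.app j (X.h a x) = Y.h a (f.app i x) :=
  (LinearMap.congr_fun (f.comm a) x).symm

variable [Fintype V] [∀ i j : V, Fintype (i ⟶ j)]

theorem Repn.inMap_apply (X : Repn Λ V) (i : V) (y : (a : Σ j : V, j ⟶ i) → X.M a.1) :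
    X.inMap i y = ∑ a, X.h a.2 (y a) := by
  simp [Repn.inMap]

theorem Repn.inMap_single [∀ i, DecidableEq (Σ j : V, j ⟶ i)] (X : Repn Λ V) (i : V)
    (a : Σ j : V, j ⟶ i) (x : X.M a.1) : X.inMap i (Pi.single a x) = X.h a.2 x := by
  rw [X.inMap_apply, Fintype.sum_eq_single a fun b hb => by rw [Pi.single_eq_of_ne hb, map_zero],
    Pi.single_eq_same]

/-- The cokernel of the canonical map `⊕_{t(α) = i} M_{s(α)} → M_i`. -/
abbrev Repn.top (X : Repn Λ V) (i : V) : Type := X.M i ⧸ LinearMap.range (X.inMap i)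

theorem RepHom.app_inMap {X Y : Repn Λ V} (f : RepHom X Y) (i : V)
    (y : (a : Σ j : V, j ⟶ i) → X.M a.1) :
    f.app i (X.inMap i y) = Y.inMap i fun a => f.app a.1 (y a) := by
  simp only [Repn.inMap_apply, map_sum, f.app_h]

theorem RepHom.comm_of_inMap {X Y : Repn Λ V} {φ : ∀ i, X.M i →ₗ[Λ] Y.M i}
    (hφ : ∀ i, φ i ∘ₗ X.inMap i = Y.inMap i ∘ₗ LinearMap.piMap fun a => φ a.1) {i j : V}
    (a : i ⟶ j) : Y.h a ∘ₗ φ i = φ j ∘ₗ X.h a := by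
  classical
  ext x
  have h := LinearMap.congr_fun (hφ j) (Pi.single ⟨i, a⟩ x)
  have hpi : LinearMap.piMap (fun b : Σ k : V, k ⟶ j => φ b.1) (Pi.single ⟨i, a⟩ x) =
      Pi.single ⟨i, a⟩ (φ i x) :=
    funext fun b => (Pi.apply_single (fun b => φ b.1) (fun b => map_zero _) _ _ b)
  simp only [LinearMap.comp_apply, hpi, Repn.inMap_single] at h
  exact h.symm

theorem exists_repHom (hV : IsAcyclic V) {X Y : Repn Λ V}
    (P : ∀ i, (X.M i →ₗ[Λ] Y.M i) → Prop)
    (hP : ∀ i (φ : ∀ a : Σ j : V, j ⟶ i, X.M a.1 →ₗ[Λ] Y.M a.1), (∀ a, P a.1 (φ a)) →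
      ∃ ψ, P i ψ ∧ ψ ∘ₗ X.inMap i = Y.inMap i ∘ₗ LinearMap.piMap φ) :
    ∃ f : RepHom X Y, ∀ i, P i (f.app i) := by
  obtain ⟨φ, hφ⟩ := exists_forall_of_wellFounded hV.wellFounded_hom
    (A := fun i => {φ : X.M i →ₗ[Λ] Y.M i // P i φ})
    (fun i prev ψ => ψ.1 ∘ₗ X.inMap i = Y.inMap i ∘ₗ LinearMap.piMap fun a => (prev a.1 ⟨a.2⟩).1)
    fun i prev => by
      obtain ⟨ψ, hψ, h⟩ := hP i (fun a => (prev a.1 ⟨a.2⟩).1) fun a => (prev a.1 ⟨a.2⟩).2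
      exact ⟨⟨ψ, hψ⟩, h⟩
  exact ⟨⟨fun i => (φ i).1, RepHom.comm_of_inMap hφ⟩, fun i => (φ i).2⟩

open Classical in
/-- The representation with modules `M i` whose canonical maps `⊕_{t(α) = i} M_{s(α)} → M_i` are
prescribed. -/
noncomputable def Repn.ofInMap (M : V → Type) [∀ i, AddCommGroup (M i)] [∀ i, Module Λ (M i)]
    (m : ∀ i, ((a : Σ j : V, j ⟶ i) → M a.1) →ₗ[Λ] M i) : Repn Λ V where
  M := M
  h {i j} a := m j ∘ₗ LinearMap.single Λ (fun b : Σ k : V, k ⟶ j => M b.1) ⟨i, a⟩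

theorem Repn.inMap_ofInMap (M : V → Type) [∀ i, AddCommGroup (M i)] [∀ i, Module Λ (M i)]
    (m : ∀ i, ((a : Σ j : V, j ⟶ i) → M a.1) →ₗ[Λ] M i) (i : V) :
    (Repn.ofInMap M m).inMap i = m i := by
  classical
  refine LinearMap.ext fun y => ?_
  rw [Repn.inMap_apply]
  change ∑ a : Σ j : V, j ⟶ i, m i (Pi.single a (y a)) = m i y
  rw [← map_sum]
  exact congrArg _ (Finset.univ_sum_single y)

end InMap

section Free

variable {Λ : Type} [Ring Λ] {V : Type} [Quiver.{1} V] [Fintype V]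
  [∀ i j : V, Fintype (i ⟶ j)]

/-- `W` is freely generated by the family of modules `G`, i.e. it is the direct sum over the
vertices `i` of the representations `G i ⊗ P(i)`. This is encoded by compatible identifications
`W_i ≃ ⊕_{t(α) = i} W_{s(α)} ⊕ G_i`, which avoids speaking of paths. -/
structure FreeOn (W : Repn Λ V) (G : V → Type) [∀ i, AddCommGroup (G i)]
    [∀ i, Module Λ (G i)] where
  e : ∀ i, W.M i ≃ₗ[Λ] ((a : Σ j : V, j ⟶ i) → W.M a.1) × G i
  e_inMap : ∀ i w, e i (W.inMap i w) = (w, 0)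

variable {W : Repn Λ V} {G : V → Type} [∀ i, AddCommGroup (G i)] [∀ i, Module Λ (G i)]

variable (G) in
theorem exists_freeOn (hV : IsAcyclic V) : ∃ W : Repn Λ V, Nonempty (FreeOn W G) := by
  obtain ⟨W, hW⟩ := exists_forall_of_wellFounded hV.wellFounded_hom
    (A := fun _ => ModuleCat.{0} Λ)
    (fun i prev w => Nonempty (w ≃ₗ[Λ] ((a : Σ j : V, j ⟶ i) → prev a.1 ⟨a.2⟩) × G i))
    fun i prev => ⟨ModuleCat.of Λ (Shrink ((a : Σ j : V, j ⟶ i) → prev a.1 ⟨a.2⟩) × G i),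
      ⟨(Shrink.linearEquiv Λ _).prodCongr (LinearEquiv.refl Λ (G i))⟩⟩
  let e i := (hW i).some
  refine ⟨Repn.ofInMap (fun i => W i) fun i => (e i).symm.toLinearMap ∘ₗ LinearMap.inl Λ _ _,
    ⟨⟨e, fun i w => ?_⟩⟩⟩
  rw [Repn.inMap_ofInMap]
  exact (e i).apply_symm_apply (w, 0)

namespace FreeOn

/-- The inclusion of the generators at the vertex `i`. -/
def incl (F : FreeOn W G) (i : V) : G i →ₗ[Λ] W.M i :=
  (F.e i).symm.toLinearMap ∘ₗ LinearMap.inr Λ _ _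

/-- The projection onto the generators at the vertex `i`. -/
def proj (F : FreeOn W G) (i : V) : W.M i →ₗ[Λ] G i :=
  LinearMap.snd Λ _ _ ∘ₗ (F.e i).toLinearMap

/-- The projection of `W_j` onto the direct summand `W_i` which is the image of the arrow `a`. -/
def component (F : FreeOn W G) {i j : V} (a : i ⟶ j) : W.M j →ₗ[Λ] W.M i :=
  LinearMap.proj (⟨i, a⟩ : Σ k : V, k ⟶ j) ∘ₗ LinearMap.fst Λ _ _ ∘ₗ (F.e j).toLinearMap

theorem proj_incl (F : FreeOn W G) (i : V) (x : G i) : F.proj i (F.incl i x) = x :=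
  congrArg Prod.snd ((F.e i).apply_symm_apply (0, x))

theorem proj_inMap (F : FreeOn W G) (i : V) (w : (a : Σ j : V, j ⟶ i) → W.M a.1) :
    F.proj i (W.inMap i w) = 0 :=
  congrArg Prod.snd (F.e_inMap i w)

theorem proj_h (F : FreeOn W G) {i j : V} (a : i ⟶ j) (x : W.M i) : F.proj j (W.h a x) = 0 := by
  classical
  exact W.inMap_single j ⟨i, a⟩ x ▸ F.proj_inMap j _

theorem component_inMap (F : FreeOn W G) {i j : V} (a : i ⟶ j)
    (w : (b : Σ k : V, k ⟶ j) → W.M b.1) : F.component a (W.inMap j w) = w ⟨i, a⟩ :=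
  congrFun (congrArg Prod.fst (F.e_inMap j w)) _

theorem component_h (F : FreeOn W G) {i j : V} (a : i ⟶ j) (x : W.M i) :
    F.component a (W.h a x) = x := by
  classical
  rw [← W.inMap_single j ⟨i, a⟩, F.component_inMap, Pi.single_eq_same]

theorem isMonoRep (F : FreeOn W G) : W.IsMonoRep := fun i w w' h => by
  simpa only [F.e_inMap, Prod.mk.injEq, and_true] using congrArg (F.e i) h

theorem fg (F : FreeOn W G) (hV : IsAcyclic V) [∀ i, Module.Finite Λ (G i)] : W.FG := fun i => by
  induction i using hV.wellFounded_hom.induction with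
  | _ i ih =>
    have : ∀ a : Σ j : V, j ⟶ i, Module.Finite Λ (W.M a.1) := fun a => ih a.1 ⟨a.2⟩
    exact Module.Finite.equiv (F.e i).symm

theorem injective (F : FreeOn W G) (hV : IsAcyclic V) [∀ i, Module.Injective Λ (G i)] (i : V) :
    Module.Injective Λ (W.M i) := by
  induction i using hV.wellFounded_hom.induction with
  | _ i ih =>
    have : ∀ a : Σ j : V, j ⟶ i, Module.Injective Λ (W.M a.1) := fun a => ih a.1 ⟨a.2⟩
    exact injective_of_retract (F.e i).toLinearMap (F.e i).symm.toLinearMap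
      (F.e i).symm_comp

theorem exists_repHom_to (F : FreeOn W G) (hV : IsAcyclic V) {X : Repn Λ V}
    (g : ∀ i, G i →ₗ[Λ] X.M i) :
    ∃ f : RepHom W X, ∀ i x, f.app i (F.incl i x) = g i x := by
  refine exists_repHom hV (fun i φ => ∀ x, φ (F.incl i x) = g i x) fun i φ _ => ?_
  refine ⟨(X.inMap i ∘ₗ LinearMap.piMap φ).coprod (g i) ∘ₗ (F.e i).toLinearMap, fun x => ?_,
    LinearMap.ext fun w => ?_⟩
  · simp only [incl, LinearMap.comp_apply, LinearEquiv.coe_coe, LinearMap.inr_apply,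
      LinearEquiv.apply_symm_apply, LinearMap.coprod_apply, map_zero, zero_add]
  · simp [F.e_inMap]

theorem exists_repHom_from (F : FreeOn W G) (hV : IsAcyclic V) [∀ i, Module.Injective Λ (G i)]
    {X : Repn Λ V} (hX : X.IsMonoRep) (c : ∀ i, X.top i →ₗ[Λ] G i) :
    ∃ f : RepHom X W, ∀ i x, F.proj i (f.app i x) = c i (Submodule.Quotient.mk x) := by
  refine exists_repHom hV
    (fun i φ => ∀ x, F.proj i (φ x) = c i (Submodule.Quotient.mk x)) fun i φ _ => ?_
  have := F.injective hV
  obtain ⟨k, hk⟩ := Module.Injective.extension_property Λ ((a : Σ j : V, j ⟶ i) → W.M a.1) _ _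
    (X.inMap i) (hX i) (LinearMap.piMap φ)
  refine ⟨(F.e i).symm.toLinearMap ∘ₗ k.prod (c i ∘ₗ Submodule.mkQ _), fun x => by simp [proj], ?_⟩
  refine LinearMap.ext fun y => (F.e i).injective ?_
  have hky : k (X.inMap i y) = LinearMap.piMap φ y := LinearMap.congr_fun hk y
  have hy : (Submodule.Quotient.mk (X.inMap i y) : X.top i) = 0 :=
    (Submodule.Quotient.mk_eq_zero _).2 ⟨y, rfl⟩
  simp [F.e_inMap, hky, hy]

end FreeOn

end Free

section Subobjects

variable {Λ : Type} [Ring Λ] {V : Type} [Quiver.{1} V]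

/-- The subrepresentation of `Y` on a family of submodules which is stable under the arrows. -/
def Repn.sub (Y : Repn Λ V) (N : ∀ i, Submodule Λ (Y.M i))
    (hN : ∀ {i j : V} (a : i ⟶ j), N i ≤ (N j).comap (Y.h a)) : Repn Λ V where
  M i := N i
  h a := (Y.h a).restrict (hN a)

/-- The inclusion of a subrepresentation. -/
def Repn.subι (Y : Repn Λ V) (N : ∀ i, Submodule Λ (Y.M i))
    (hN : ∀ {i j : V} (a : i ⟶ j), N i ≤ (N j).comap (Y.h a)) : RepHom (Y.sub N hN) Y where
  app i := (N i).subtype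
  comm _ := rfl

/-- The cokernel of a morphism of representations, computed vertexwise. -/
def coker {X Y : Repn Λ V} (f : RepHom X Y) : Repn Λ V where
  M i := Y.M i ⧸ LinearMap.range (f.app i)
  h {i j} a := (LinearMap.range (f.app i)).mapQ (LinearMap.range (f.app j)) (Y.h a) <| by
    rintro _ ⟨x, rfl⟩
    exact ⟨X.h a x, f.app_h a x⟩

/-- The projection onto the cokernel. -/
def cokerπ {X Y : Repn Λ V} (f : RepHom X Y) : RepHom Y (coker f) where
  app i := (LinearMap.range (f.app i)).mkQ
  comm _ := rfl

theorem cokerπ_eq_zero {X Y : Repn Λ V} (f : RepHom X Y) {i : V} {y : Y.M i} :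
    (cokerπ f).app i y = 0 ↔ y ∈ LinearMap.range (f.app i) :=
  Submodule.Quotient.mk_eq_zero _

theorem cokerπ_surjective {X Y : Repn Λ V} (f : RepHom X Y) (i : V) :
    Function.Surjective ((cokerπ f).app i) :=
  Submodule.mkQ_surjective _

theorem coker_fg {X Y : Repn Λ V} (f : RepHom X Y) (hY : Y.FG) : (coker f).FG := fun i =>
  have := hY i
  Module.Finite.of_surjective _ (cokerπ_surjective f i)

theorem isSES_cokerπ {X Y : Repn Λ V} {f : RepHom X Y} (hf : ∀ i, Function.Injective (f.app i)) :
    IsSES f (cokerπ f) :=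
  ⟨hf, cokerπ_surjective f, fun _ => (Submodule.ker_mkQ _).symm⟩

/-- The direct sum of two representations. -/
def Repn.prod (X Y : Repn Λ V) : Repn Λ V where
  M i := X.M i × Y.M i
  h a := (X.h a).prodMap (Y.h a)

/-- The projection of a direct sum onto the first summand. -/
def RepHom.fst (X Y : Repn Λ V) : RepHom (X.prod Y) X :=
  ⟨fun _ => LinearMap.fst Λ _ _, fun _ => rfl⟩

/-- The projection of a direct sum onto the second summand. -/
def RepHom.snd (X Y : Repn Λ V) : RepHom (X.prod Y) Y :=
  ⟨fun _ => LinearMap.snd Λ _ _, fun _ => rfl⟩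

/-- The inclusion of the first summand of a direct sum. -/
def RepHom.inl (X Y : Repn Λ V) : RepHom X (X.prod Y) :=
  ⟨fun _ => LinearMap.inl Λ _ _, fun a => LinearMap.ext fun _ => Prod.ext rfl (map_zero (Y.h a))⟩

/-- The inclusion of the second summand of a direct sum. -/
def RepHom.inr (X Y : Repn Λ V) : RepHom Y (X.prod Y) :=
  ⟨fun _ => LinearMap.inr Λ _ _, fun a => LinearMap.ext fun _ => Prod.ext (map_zero (X.h a)) rfl⟩

/-- The morphism into a direct sum with given components. -/
def RepHom.lift {X Y Z : Repn Λ V} (f : RepHom X Y) (g : RepHom X Z) : RepHom X (Y.prod Z) :=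
  ⟨fun i => (f.app i).prod (g.app i), fun a =>
    LinearMap.ext fun x => Prod.ext (f.app_h a x).symm (g.app_h a x).symm⟩

theorem Repn.FG.prod {X Y : Repn Λ V} (hX : X.FG) (hY : Y.FG) : (X.prod Y).FG := fun i =>
  have := hX i
  have := hY i
  inferInstanceAs (Module.Finite Λ (X.M i × Y.M i))

theorem RepHom.lift_app {X Y Z : Repn Λ V} (f : RepHom X Y) (g : RepHom X Z) (i : V) (x : X.M i) :
    (f.lift g).app i x = (inl Y Z).app i (f.app i x) + (inr Y Z).app i (g.app i x) :=
  Prod.ext (add_zero _).symm (zero_add _).symm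

/-- The additive inverse of a morphism of representations. -/
def RepHom.neg {X Y : Repn Λ V} (f : RepHom X Y) : RepHom X Y :=
  ⟨fun i => -f.app i, fun a => by rw [LinearMap.comp_neg, f.comm, LinearMap.neg_comp]⟩

variable [Fintype V] [∀ i j : V, Fintype (i ⟶ j)]

theorem Repn.InMono.sub [IsNoetherianRing Λ] {Y : Repn Λ V} (hY : Y.InMono)
    (N : ∀ i, Submodule Λ (Y.M i))
    (hN : ∀ {i j : V} (a : i ⟶ j), N i ≤ (N j).comap (Y.h a)) : (Y.sub N hN).InMono := by
  refine ⟨fun i => ?_, fun i y z hyz => ?_⟩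
  · have := hY.1 i
    exact inferInstanceAs (Module.Finite Λ (N i))
  · have hι : Y.inMap i (fun a => (Y.subι N hN).app a.1 (y a)) =
        Y.inMap i (fun a => (Y.subι N hN).app a.1 (z a)) := by
      rw [← RepHom.app_inMap, ← RepHom.app_inMap, hyz]
    exact funext fun a => Subtype.ext (congrFun (hY.2 i hι) a)

theorem coker_isMonoRep_iff {X Y : Repn Λ V} (f : RepHom X Y) :
    (coker f).IsMonoRep ↔ ∀ i y, Y.inMap i y ∈ LinearMap.range (f.app i) →
      ∀ a : Σ j : V, j ⟶ i, y a ∈ LinearMap.range (f.app a.1) := by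
  simp only [← cokerπ_eq_zero, RepHom.app_inMap]
  refine ⟨fun h i y hy a => congrFun (h i (hy.trans (map_zero _).symm)) a, fun h i => ?_⟩
  refine (injective_iff_map_eq_zero _).2 fun z hz => ?_
  obtain ⟨y, rfl⟩ : ∃ y : (a : Σ j : V, j ⟶ i) → Y.M a.1, (fun a => (cokerπ f).app a.1 (y a)) = z :=
    ⟨fun a => (cokerπ_surjective f a.1 (z a)).choose,
      funext fun a => (cokerπ_surjective f a.1 (z a)).choose_spec⟩
  exact funext (h i y hz)

/-- The admissible monomorphisms of the exact category `mono(Q,Λ)`: monomorphisms whose cokernel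
again satisfies the monomorphism condition. -/
def IsInflation {X Y : Repn Λ V} (f : RepHom X Y) : Prop :=
  (∀ i, Function.Injective (f.app i)) ∧ (coker f).IsMonoRep

theorem Repn.inMap_prod (X Y : Repn Λ V) (i : V)
    (y : (a : Σ j : V, j ⟶ i) → (X.prod Y).M a.1) :
    (X.prod Y).inMap i y = (X.inMap i fun a => (y a).1, Y.inMap i fun a => (y a).2) :=
  Prod.ext ((RepHom.fst X Y).app_inMap i y) ((RepHom.snd X Y).app_inMap i y)

theorem IsInflation.lift {X Y W : Repn Λ V} {u : RepHom X W} (hu : IsInflation u)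
    (hY : Y.IsMonoRep) (f : RepHom X Y) : IsInflation (f.lift u) := by
  refine ⟨fun i x x' h => hu.1 i (congrArg Prod.snd h), (coker_isMonoRep_iff _).2 ?_⟩
  rintro i y ⟨x, hx⟩
  rw [Repn.inMap_prod] at hx
  have hux : W.inMap i (fun a => (y a).2) = u.app i x := (congrArg Prod.snd hx).symm
  choose z hz using (coker_isMonoRep_iff u).1 hu.2 i _ ⟨x, hux.symm⟩
  have hxz : x = X.inMap i z := hu.1 i <| by simp only [u.app_inMap, hz, hux]
  have hfz : Y.inMap i (fun a => f.app a.1 (z a)) = Y.inMap i fun a => (y a).1 := by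
    rw [← f.app_inMap, ← hxz]
    exact congrArg Prod.fst hx
  exact fun a => ⟨z a, Prod.ext (congrFun (hY i hfz) a) (hz a)⟩

theorem coker_inMono {X Y : Repn Λ V} {f : RepHom X Y} (hf : IsInflation f) (hY : Y.FG) :
    (coker f).InMono :=
  ⟨coker_fg f hY, hf.2⟩

end Subobjects

section ShortExact

variable {Λ : Type} [Ring Λ] {V : Type} [Quiver.{1} V] {X E N : Repn Λ V}
  {f : RepHom X E} {g : RepHom E N}

theorem IsSES.exact (h : IsSES f g) (i : V) : Function.Exact (f.app i) (g.app i) :=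
  LinearMap.exact_iff.2 (h.2.2 i).symm

theorem IsSES.exists_comp_eq {Y : Type*} [AddCommGroup Y] [Module Λ Y] (h : IsSES f g) {i : V}
    {k : Y →ₗ[Λ] E.M i} (hk : g.app i ∘ₗ k = 0) : ∃ w, f.app i ∘ₗ w = k :=
  exists_comp_eq_of_range_le (h.1 i) k (h.2.2 i ▸ LinearMap.range_le_ker_iff.2 hk)

theorem IsSES.exists_app_section (h : IsSES f g) {i : V} {ρ : E.M i →ₗ[Λ] X.M i}
    (hρ : ρ ∘ₗ f.app i = LinearMap.id) : ∃ σ, g.app i ∘ₗ σ = LinearMap.id := by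
  have hsplit := (h.exact i).split_tfae'.out 0 1
  exact (hsplit.2 ⟨h.2.1 i, ρ, hρ⟩).2

theorem IsSES.exists_retraction (h : IsSES f g) {s : RepHom N E}
    (hs : ∀ i, g.app i ∘ₗ s.app i = LinearMap.id) :
    ∃ r : RepHom E X, r.comp f = RepHom.id X ∧
      ∀ i, f.app i ∘ₗ r.app i = LinearMap.id - s.app i ∘ₗ g.app i := by
  have hr : ∀ i, ∃ r, f.app i ∘ₗ r = LinearMap.id - s.app i ∘ₗ g.app i := fun i =>
    h.exists_comp_eq <| by
      rw [LinearMap.comp_sub, ← LinearMap.comp_assoc, hs, LinearMap.id_comp, LinearMap.comp_id,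
        sub_self]
  choose r hr using hr
  have hfr : ∀ i x, f.app i (r i x) = x - s.app i (g.app i x) := fun i =>
    LinearMap.congr_fun (hr i)
  refine ⟨⟨r, fun {i j} a => LinearMap.ext fun x => h.1 j ?_⟩, ?_, hr⟩
  · simp only [LinearMap.comp_apply, hfr, RepHom.app_h, map_sub]
  · refine RepHom.ext (funext fun i => LinearMap.ext fun x => h.1 i ?_)
    have hgf : g.app i (f.app i x) = 0 := (h.exact i).apply_apply_eq_zero x
    change f.app i (r i (f.app i x)) = f.app i x
    rw [hfr, hgf, map_zero, sub_zero]

variable [Fintype V] [∀ i j : V, Fintype (i ⟶ j)]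

theorem IsSES.exists_section (hV : IsAcyclic V) (h : IsSES f g)
    (hρ : ∀ i, ∃ ρ, ρ ∘ₗ f.app i = LinearMap.id)
    (hext : ∀ i (w : ((a : Σ j : V, j ⟶ i) → N.M a.1) →ₗ[Λ] X.M i), ∃ w', w' ∘ₗ N.inMap i = w) :
    ∃ s : RepHom N E, ∀ i, g.app i ∘ₗ s.app i = LinearMap.id := by
  refine exists_repHom hV (fun i s => g.app i ∘ₗ s = LinearMap.id) fun i φ hφ => ?_
  obtain ⟨ρ, hρ⟩ := hρ i
  obtain ⟨σ, hσ⟩ := h.exists_app_section hρ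
  obtain ⟨w, hw⟩ : ∃ w, f.app i ∘ₗ w = E.inMap i ∘ₗ LinearMap.piMap φ - σ ∘ₗ N.inMap i := by
    refine h.exists_comp_eq (LinearMap.ext fun y => ?_)
    have hgφ : ∀ a, g.app a.1 (φ a (y a)) = y a := fun a => LinearMap.congr_fun (hφ a) (y a)
    have hgσ : g.app i (σ (N.inMap i y)) = N.inMap i y := LinearMap.congr_fun hσ _
    simp only [LinearMap.comp_apply, LinearMap.sub_apply, map_sub, g.app_inMap, hgσ,
      LinearMap.coe_piMap, Pi.map_apply, hgφ, sub_self, LinearMap.zero_apply]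
  obtain ⟨w', rfl⟩ := hext i w
  have hgf : g.app i ∘ₗ f.app i = 0 := (h.exact i).linearMap_comp_eq_zero
  refine ⟨σ + f.app i ∘ₗ w', ?_, ?_⟩
  · rw [LinearMap.comp_add, ← LinearMap.comp_assoc, hgf, LinearMap.zero_comp, add_zero, hσ]
  · rw [LinearMap.add_comp, LinearMap.comp_assoc, hw, add_sub_cancel]

theorem injInMono_of_injective (hV : IsAcyclic V) [∀ i, Module.Injective Λ (X.M i)] :
    InjInMono X := by
  intro E N hN f g h
  obtain ⟨s, hs⟩ := h.exists_section hV
    (fun i => Module.Injective.extension_property Λ (X.M i) _ _ (f.app i) (h.1 i) LinearMap.id)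
    fun i => Module.Injective.extension_property Λ (X.M i) _ _ (N.inMap i) (hN.2 i)
  obtain ⟨r, hr, -⟩ := h.exists_retraction hs
  exact ⟨r, hr⟩

end ShortExact

section EnoughInjectives

variable {Λ : Type} [Ring Λ] {V : Type} [Quiver.{1} V] [Fintype V] [∀ i j : V, Fintype (i ⟶ j)]

theorem exists_inflation_injective (hΛ : HasEnoughFGInjectives Λ) (hV : IsAcyclic V)
    {X : Repn Λ V} (hX : X.InMono) : ∃ (W : Repn Λ V) (u : RepHom X W), W.InMono ∧
      (∀ i, Module.Injective Λ (W.M i)) ∧ IsInflation u := by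
  have hG : ∀ i, ∃ (G : ModuleCat.{0} Λ) (c : X.top i →ₗ[Λ] G),
      Module.Injective Λ G ∧ Module.Finite Λ G ∧ Function.Injective c := fun i =>
    have := hX.1 i
    hΛ _ inferInstance
  choose G c _ _ hc using hG
  obtain ⟨W, ⟨F⟩⟩ := exists_freeOn (Λ := Λ) (fun i => (G i : Type)) hV
  obtain ⟨u, hu⟩ := F.exists_repHom_from hV hX.2 c
  have hmem : ∀ i x w, u.app i x = W.inMap i w → ∃ y, X.inMap i y = x := by
    intro i x w hxw
    have hcx : c i (Submodule.Quotient.mk x) = 0 := by rw [← hu, hxw, F.proj_inMap]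
    exact (Submodule.Quotient.mk_eq_zero _).1 (hc i (hcx.trans (map_zero _).symm))
  have hinj : ∀ i, Function.Injective (u.app i) := fun i => by
    induction i using hV.wellFounded_hom.induction with
    | _ i ih =>
      refine (injective_iff_map_eq_zero _).2 fun x hx => ?_
      obtain ⟨y, rfl⟩ := hmem i x 0 (hx.trans (map_zero _).symm)
      rw [u.app_inMap] at hx
      have hy : y = 0 := funext fun a => ih a.1 ⟨a.2⟩ <|
        (congrFun (F.isMonoRep i (hx.trans (map_zero _).symm)) a).trans (map_zero _).symm
      rw [hy, map_zero]
  refine ⟨W, u, ⟨F.fg hV, F.isMonoRep⟩, F.injective hV, hinj, (coker_isMonoRep_iff u).2 ?_⟩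
  rintro i w ⟨x, hx⟩ a
  obtain ⟨y, rfl⟩ := hmem i x w hx
  rw [u.app_inMap] at hx
  exact ⟨y a, congrFun (F.isMonoRep i hx) a⟩

theorem injective_of_injInMono (hΛ : HasEnoughFGInjectives Λ) (hV : IsAcyclic V)
    {Z : Repn Λ V} (hZ : Z.InMono) (hZ' : InjInMono Z) (i : V) : Module.Injective Λ (Z.M i) := by
  obtain ⟨W, u, hW, _, hu⟩ := exists_inflation_injective hΛ hV hZ
  obtain ⟨r, hr⟩ := hZ' W (coker u) (coker_inMono hu hW.1) u (cokerπ u) (isSES_cokerπ hu.1)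
  exact injective_of_retract (u.app i) (r.app i) (congrFun (congrArg RepHom.app hr) i)

end EnoughInjectives

section Density

variable {Λ : Type} [Ring Λ] {V : Type} [Quiver.{1} V]

theorem RepHom.stEq_comm {X Y : Repn Λ V} (f : RepHom X Y) {i j : V} (a : i ⟶ j) :
    StEq Λ (Y.h a ∘ₗ f.app i) (f.app j ∘ₗ X.h a) :=
  f.comm a ▸ StEq.refl _

theorem IsSES.stEq_of_comp_eq {W X Z : Repn Λ V} {f : RepHom W X} {g : RepHom X Z}
    (h : IsSES f g) {A : Type} [AddCommGroup A] [Module Λ A] {i : V} [Module.Injective Λ (W.M i)]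
    {k l : A →ₗ[Λ] X.M i} (hkl : g.app i ∘ₗ k = g.app i ∘ₗ l) : StEq Λ k l := by
  obtain ⟨w, hw⟩ : ∃ w, f.app i ∘ₗ w = k - l :=
    h.exists_comp_eq (by rw [LinearMap.comp_sub, hkl, sub_self])
  rw [StEq, ← hw]
  exact FactorsThroughInj.of_injective w (f.app i)

theorem IsSES.stRepIso {W X Z : Repn Λ V} {f : RepHom W X} {g : RepHom X Z} (h : IsSES f g)
    [∀ i, Module.Injective Λ (W.M i)] : StRepIso Z X := by
  have hσ : ∀ i, ∃ σ, g.app i ∘ₗ σ = LinearMap.id := fun i => by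
    obtain ⟨ρ, hρ⟩ := Module.Injective.extension_property Λ (W.M i) _ _ (f.app i) (h.1 i)
      LinearMap.id
    exact h.exists_app_section hρ
  choose σ hσ using hσ
  refine ⟨⟨σ, fun i j a => h.stEq_of_comp_eq ?_⟩, ⟨g.app, fun i j a => g.stEq_comm a⟩,
    fun i => ?_, fun i => h.stEq_of_comp_eq ?_⟩
  · rw [← LinearMap.comp_assoc, ← g.comm, LinearMap.comp_assoc, hσ, ← LinearMap.comp_assoc, hσ,
      LinearMap.comp_id, LinearMap.id_comp]
  · exact hσ i ▸ StEq.refl _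
  · rw [← LinearMap.comp_assoc, hσ, LinearMap.id_comp, LinearMap.comp_id]

/-- The morphism out of a cokernel induced by a morphism which vanishes on the image. -/
def coker.desc {X Y Z : Repn Λ V} (f : RepHom X Y) (g : RepHom Y Z)
    (hgf : ∀ i, LinearMap.range (f.app i) ≤ LinearMap.ker (g.app i)) : RepHom (coker f) Z where
  app i := (LinearMap.range (f.app i)).liftQ (g.app i) (hgf i)
  comm a := Submodule.linearMap_qext _ (g.comm a)

theorem IsSES.exists_pushout {K F Z W : Repn Λ V} {f : RepHom K F} {g : RepHom F Z}
    (h : IsSES f g) (u : RepHom K W) :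
    ∃ (v : RepHom W (coker (f.lift u))) (q : RepHom (coker (f.lift u)) Z), IsSES v q := by
  have hgf : ∀ i x, g.app i (f.app i x) = 0 := fun i x => (h.exact i).apply_apply_eq_zero x
  refine ⟨(cokerπ _).comp (RepHom.inr F W), coker.desc _ (g.comp (RepHom.fst F W)) ?_,
    fun i => ?_, fun i z => ?_, fun i => ?_⟩
  · rintro i _ ⟨x, rfl⟩
    exact hgf i x
  · refine (injective_iff_map_eq_zero _).2 fun w hw => ?_
    obtain ⟨x, hx⟩ := (cokerπ_eq_zero _).1 hw
    have hfx : f.app i x = f.app i 0 := (congrArg Prod.fst hx).trans (map_zero _).symm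
    have hux : u.app i x = w := congrArg Prod.snd hx
    rw [← hux, h.1 i hfx, map_zero]
  · obtain ⟨x, rfl⟩ := h.2.1 i z
    exact ⟨(cokerπ _).app i (x, 0), rfl⟩
  · refine le_antisymm ?_ fun c hc => ?_
    · rintro _ ⟨w, rfl⟩
      exact map_zero (g.app i)
    · obtain ⟨⟨x, w⟩, rfl⟩ := cokerπ_surjective _ i c
      obtain ⟨k, rfl⟩ := (h.exact i x).1 hc
      refine ⟨w - u.app i k, (Submodule.Quotient.eq _).2 ⟨-k, Prod.ext ?_ ?_⟩⟩
      · exact (map_neg _ _).trans (zero_sub _).symm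
      · exact (map_neg _ _).trans (sub_sub_cancel_left _ _).symm

variable [Fintype V] [∀ i j : V, Fintype (i ⟶ j)]

theorem Repn.FG.exists_surjective (hV : IsAcyclic V) {Z : Repn Λ V} (hZ : Z.FG) :
    ∃ (F : Repn Λ V) (p : RepHom F Z), F.InMono ∧ ∀ i, Function.Surjective (p.app i) := by
  have : ∀ i, Module.Finite Λ (Z.M i) := hZ
  obtain ⟨F, ⟨hF⟩⟩ := exists_freeOn (Λ := Λ) Z.M hV
  obtain ⟨p, hp⟩ := hF.exists_repHom_to hV (X := Z) fun _ => LinearMap.id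
  exact ⟨F, p, ⟨hF.fg hV, hF.isMonoRep⟩, fun i z => ⟨_, hp i z⟩⟩

theorem phiDense [IsNoetherianRing Λ] (hΛ : HasEnoughFGInjectives Λ) (hV : IsAcyclic V) :
    PhiDense Λ V := by
  intro Z hZ
  obtain ⟨F, p, hF, hp⟩ := hZ.exists_surjective hV
  have hker {i j : V} (a : i ⟶ j) :
      LinearMap.ker (p.app i) ≤ (LinearMap.ker (p.app j)).comap (F.h a) := fun x hx =>
    (p.app_h a x).trans ((congrArg _ hx).trans (map_zero _))
  have hses : IsSES (F.subι (fun i => LinearMap.ker (p.app i)) hker) p :=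
    ⟨fun i => Submodule.subtype_injective _, hp, fun i => Submodule.range_subtype _⟩
  obtain ⟨W, u, hW, _, hu⟩ := exists_inflation_injective hΛ hV (hF.sub _ hker)
  obtain ⟨v, q, hvq⟩ := hses.exists_pushout u
  exact ⟨_, coker_inMono (hu.lift hF.2 _) (hF.1.prod hW.1), hvq.stRepIso⟩

end Density

section Fullness

variable {Λ : Type} [Ring Λ] {V : Type} [Quiver.{1} V] [Fintype V]
  [∀ i j : V, Fintype (i ⟶ j)]

theorem StRepHom.exists_stFamEq (hV : IsAcyclic V) {X Y : Repn Λ V} (hX : X.IsMonoRep)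
    (φ : StRepHom X Y) : ∃ f : RepHom X Y, StFamEq f.app φ.1 := by
  refine exists_repHom hV (fun i ψ => StEq Λ ψ (φ.1 i)) fun i ψ hψ => ?_
  have hδ (a : Σ j : V, j ⟶ i) : StEq Λ (φ.1 i ∘ₗ X.h a.2) (Y.h a.2 ∘ₗ ψ a) :=
    (φ.2 a.1 i a.2).symm.trans ((hψ a).symm.comp_left (Y.h a.2))
  obtain ⟨k, hk, hkX⟩ := FactorsThroughInj.exists_extension (hX i) hδ
  refine ⟨φ.1 i - k, ?_, LinearMap.ext fun y => ?_⟩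
  · rw [StEq, sub_sub_cancel_left]
    exact hk.neg
  · rw [LinearMap.comp_apply, LinearMap.sub_apply, hkX]
    simp only [LinearMap.comp_apply, LinearMap.sub_apply, Finset.sum_sub_distrib,
      Repn.inMap_apply, map_sum, sub_sub_cancel, LinearMap.coe_piMap, Pi.map_apply]

end Fullness

section ReflectsIsos

variable {Λ : Type} [Ring Λ]

theorem injective_of_exact_of_retraction {A B C : Type} [AddCommGroup A] [Module Λ A]
    [AddCommGroup B] [Module Λ B] [AddCommGroup C] [Module Λ C] {f : A →ₗ[Λ] B} {g : B →ₗ[Λ] C}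
    (hfg : Function.Exact f g) {σ : C →ₗ[Λ] B} (hσ : g ∘ₗ σ = LinearMap.id) {ρ : B →ₗ[Λ] A}
    (hρ : StEq Λ (f ∘ₗ ρ) LinearMap.id) : Module.Injective Λ C := by
  obtain ⟨J, hJ, p, q, hpq⟩ := hρ
  refine injective_of_retract (p ∘ₗ σ) (-(g ∘ₗ q)) ?_
  calc -(g ∘ₗ q) ∘ₗ p ∘ₗ σ = -(g ∘ₗ (q ∘ₗ p) ∘ₗ σ) := by
        simp only [LinearMap.comp_assoc]
    _ = g ∘ₗ σ - (g ∘ₗ f) ∘ₗ ρ ∘ₗ σ := by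
        simp only [hpq, LinearMap.sub_comp, LinearMap.comp_sub, LinearMap.id_comp, neg_sub,
          LinearMap.comp_assoc]
    _ = LinearMap.id := by
        rw [hfg.linearMap_comp_eq_zero, LinearMap.zero_comp, sub_zero, hσ]

theorem exists_retraction_prod {A B W : Type} [AddCommGroup A] [Module Λ A] [AddCommGroup B]
    [Module Λ B] [AddCommGroup W] [Module Λ W] [Module.Injective Λ W] {f : A →ₗ[Λ] B}
    {u : A →ₗ[Λ] W} (hu : Function.Injective u) {ψ : B →ₗ[Λ] A}
    (hψf : StEq Λ (ψ ∘ₗ f) LinearMap.id) (hfψ : StEq Λ (f ∘ₗ ψ) LinearMap.id) :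
    ∃ ρ : B × W →ₗ[Λ] A, ρ ∘ₗ f.prod u = LinearMap.id ∧
      StEq Λ (f.prod u ∘ₗ ρ) LinearMap.id := by
  obtain ⟨J, hJ, p, q, hqp⟩ := hψf
  obtain ⟨k, rfl⟩ := Module.Injective.extension_property Λ J _ _ u hu p
  have hqk (x : A) : q (k (u x)) = ψ (f x) - x := LinearMap.congr_fun hqp x
  refine ⟨ψ ∘ₗ LinearMap.fst Λ B W - q ∘ₗ k ∘ₗ LinearMap.snd Λ B W, ?_, ?_⟩
  · ext x
    simp [hqk]
  · have hsum : f.prod u ∘ₗ (ψ ∘ₗ LinearMap.fst Λ B W - q ∘ₗ k ∘ₗ LinearMap.snd Λ B W) -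
          LinearMap.id =
        LinearMap.inl Λ B W ∘ₗ (f ∘ₗ ψ - LinearMap.id) ∘ₗ LinearMap.fst Λ B W +
          LinearMap.inr Λ B W ∘ₗ (u ∘ₗ ψ ∘ₗ LinearMap.fst Λ B W - LinearMap.snd Λ B W) -
          (f.prod u ∘ₗ q) ∘ₗ k ∘ₗ LinearMap.snd Λ B W := by
      ext <;> simp [sub_eq_add_neg, add_comm]
    rw [StEq, hsum]
    exact ((FactorsThroughInj.comp_right hfψ _).comp_left _ |>.add
      (FactorsThroughInj.of_injective _ _)).sub (FactorsThroughInj.of_injective _ _)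

variable {V : Type} [Quiver.{1} V] [Fintype V] [∀ i j : V, Fintype (i ⟶ j)]

theorem IsSES.exists_splitting (hV : IsAcyclic V) {X E N : Repn Λ V} {f : RepHom X E}
    {g : RepHom E N} (h : IsSES f g) (hN : N.IsMonoRep) [∀ i, Module.Injective Λ (N.M i)]
    (hρ : ∀ i, ∃ ρ, ρ ∘ₗ f.app i = LinearMap.id) :
    ∃ (r : RepHom E X) (s : RepHom N E), r.comp f = RepHom.id X ∧
      ∀ i, f.app i ∘ₗ r.app i = LinearMap.id - s.app i ∘ₗ g.app i := by
  obtain ⟨s, hs⟩ := h.exists_section hV hρ fun i w => by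
    obtain ⟨k, hk⟩ := Module.Injective.extension_property Λ
      ((a : Σ j : V, j ⟶ i) → N.M a.1) _ _ (N.inMap i) (hN i) LinearMap.id
    exact ⟨w ∘ₗ k, by rw [LinearMap.comp_assoc, hk, LinearMap.comp_id]⟩
  obtain ⟨r, hr, hfr⟩ := h.exists_retraction hs
  exact ⟨r, s, hr, hfr⟩

theorem phiReflectsIsos (hΛ : HasEnoughFGInjectives Λ) (hV : IsAcyclic V) :
    PhiReflectsIsos Λ V := by
  rintro X Y hX hY f ⟨ψ, hψf, hfψ⟩
  obtain ⟨W, u, hW, _, hu⟩ := exists_inflation_injective hΛ hV hX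
  have hinfl := hu.lift hY.2 f
  have hses := isSES_cokerπ hinfl.1
  have hC : (coker (f.lift u)).InMono := coker_inMono hinfl (hY.1.prod hW.1)
  choose ρ hρ hρ' using fun i => exists_retraction_prod (hu.1 i) (hψf i) (hfψ i)
  have hCinj (i : V) : Module.Injective Λ ((coker (f.lift u)).M i) := by
    obtain ⟨σ, hσ⟩ := hses.exists_app_section (hρ i)
    exact injective_of_exact_of_retraction (hses.exact i) hσ (hρ' i)
  obtain ⟨r, s, hr, hfr⟩ := hses.exists_splitting hV hC.2 fun i => ⟨ρ i, hρ i⟩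
  refine ⟨r.comp (RepHom.inl Y W),
    ⟨W, hW, injInMono_of_injective hV, u, (r.comp (RepHom.inr Y W)).neg,
      fun i => LinearMap.ext fun x => ?_⟩,
    ⟨_, hC, injInMono_of_injective hV, (cokerπ _).comp (RepHom.inl Y W),
      ((RepHom.fst Y W).comp s).neg, fun i => LinearMap.ext fun y => ?_⟩⟩
  · have hx : r.app i ((f.lift u).app i x) = x :=
      LinearMap.congr_fun (congrFun (congrArg RepHom.app hr) i) x
    rw [RepHom.lift_app, map_add] at hx
    exact neg_eq_iff_eq_neg.2 ((eq_sub_of_add_eq' hx).trans (neg_sub _ _).symm)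
  · have hy : f.app i (r.app i ((RepHom.inl Y W).app i y)) =
        y - (s.app i ((cokerπ (f.lift u)).app i ((RepHom.inl Y W).app i y))).1 :=
      congrArg Prod.fst (LinearMap.congr_fun (hfr i) ((RepHom.inl Y W).app i y))
    exact ((congrArg (· - y) hy).trans (sub_sub_cancel_left y _)).symm

end ReflectsIsos

section Hereditary

variable {Λ : Type} [Ring Λ]

theorem exists_largest_injective (hΛ : ∀ I : Submodule Λ Λ, Module.Projective Λ I)
    (B : Type) [AddCommGroup B] [Module Λ B] [IsNoetherian Λ B] :
    ∃ T : Submodule Λ B, Module.Injective Λ T ∧ ∀ (J : Type) [AddCommGroup J] [Module Λ J]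
      [Module.Injective Λ J] (v : J →ₗ[Λ] B), LinearMap.range v ≤ T := by
  have hrange (J : Type) [AddCommGroup J] [Module Λ J] [Module.Injective Λ J] (v : J →ₗ[Λ] B) :
      Module.Injective Λ (LinearMap.range v) :=
    injective_of_surjective hΛ v.surjective_rangeRestrict
  obtain ⟨T, hT, hmax⟩ := (wellFounded_gt (α := Submodule Λ B)).has_min
    {T | Module.Injective Λ T} ⟨⊥, injective_of_subsingleton _⟩
  refine ⟨T, hT, fun J _ _ _ v => ?_⟩
  have hsup : Module.Injective Λ ↥(T ⊔ LinearMap.range v) := by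
    rw [← T.range_subtype, ← LinearMap.range_coprod]
    have : Module.Injective Λ T := hT
    exact hrange _ _
  exact sup_eq_left.1 (le_sup_left.eq_or_lt.resolve_right (hmax _ hsup)).symm

variable {V : Type} [Quiver.{1} V] [Fintype V] [∀ i j : V, Fintype (i ⟶ j)]

theorem phiFaithful_of_hereditary [IsNoetherianRing Λ] (hV : IsAcyclic V)
    (hΛ : ∀ I : Submodule Λ Λ, Module.Projective Λ I) : PhiFaithful Λ V := by
  intro X Y _ hY f g hfg
  have : ∀ i, Module.Finite Λ (Y.M i) := hY.1
  choose T hTinj hT using fun i => exists_largest_injective hΛ (Y.M i)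
  have hTY {i j : V} (a : i ⟶ j) : T i ≤ (T j).comap (Y.h a) := fun y hy =>
    hT j (T i) (Y.h a ∘ₗ (T i).subtype) ⟨⟨y, hy⟩, rfl⟩
  have hmem (i : V) (x : X.M i) : (f.app i - g.app i) x ∈ T i := by
    obtain ⟨J, _, u, v, huv⟩ := hfg i
    exact huv ▸ hT i J v ⟨u x, rfl⟩
  have : ∀ i, Module.Injective Λ ((Y.sub T hTY).M i) := hTinj
  refine ⟨Y.sub T hTY, hY.sub T hTY, injInMono_of_injective hV,
    ⟨fun i => (f.app i - g.app i).codRestrict (T i) (hmem i), fun {i j} a =>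
      LinearMap.ext fun x => Subtype.ext ?_⟩, Y.subι T hTY, fun i => rfl⟩
  change Y.h a (f.app i x - g.app i x) = f.app j (X.h a x) - g.app j (X.h a x)
  rw [map_sub, f.app_h, g.app_h]

end Hereditary

section Converse

variable {Λ : Type} [Ring Λ] {V : Type} [Quiver.{1} V]

/-- The representation with the module `B` at the vertex `j` and zero elsewhere. The functions on
the proposition `k = j` give a dependent type equal to `B` or zero without casts. -/
def Repn.skyscraper (j : V) (B : Type) [AddCommGroup B] [Module Λ B] : Repn Λ V where
  M k := PLift (k = j) → B
  h _ := 0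

variable [Fintype V] [∀ i j : V, Fintype (i ⟶ j)]

/-- The map induced on tops by a morphism of representations. -/
noncomputable def RepHom.mapTop {X Y : Repn Λ V} (f : RepHom X Y) (i : V) : X.top i →ₗ[Λ] Y.top i :=
  (LinearMap.range (X.inMap i)).mapQ (LinearMap.range (Y.inMap i)) (f.app i) <| by
    rintro _ ⟨y, rfl⟩
    exact ⟨_, (f.app_inMap i y).symm⟩

theorem injective_top (hΛ : HasEnoughFGInjectives Λ) (hV : IsAcyclic V) {Z : Repn Λ V}
    (hZ : Z.InMono) (hZ' : InjInMono Z) (i : V) : Module.Injective Λ (Z.top i) := by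
  have := injective_of_injInMono hΛ hV hZ hZ'
  obtain ⟨ρ, hρ⟩ := Module.Injective.extension_property Λ
    ((a : Σ j : V, j ⟶ i) → Z.M a.1) _ _ (Z.inMap i) (hZ.2 i) LinearMap.id
  have hex : Function.Exact (Z.inMap i) (LinearMap.range (Z.inMap i)).mkQ :=
    LinearMap.exact_map_mkQ_range _
  have hsplit := hex.split_tfae'.out 1 0
  obtain ⟨-, σ, hσ⟩ := hsplit.1 ⟨Submodule.mkQ_surjective _, ρ, hρ⟩
  exact injective_of_retract σ _ hσ

section Skyscraper

variable {j : V} {B : Type} [AddCommGroup B] [Module Λ B]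

theorem Repn.inMap_skyscraper (k : V) : (Repn.skyscraper (Λ := Λ) j B).inMap k = 0 :=
  LinearMap.ext fun _ => (Repn.inMap_apply _ _ _).trans (Finset.sum_eq_zero fun _ _ => rfl)

theorem Repn.skyscraper_inMono [Module.Finite Λ B] (hj : ∀ k, IsEmpty (j ⟶ k)) :
    (Repn.skyscraper (Λ := Λ) j B).InMono := by
  refine ⟨fun k => ?_, fun k y z _ => funext fun a => funext fun h => ?_⟩
  · exact inferInstanceAs (Module.Finite Λ (PLift (k = j) → B))
  · obtain ⟨l, a⟩ := a
    obtain rfl := h.down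
    exact (hj k).elim a

theorem exists_repHom_skyscraper {X : Repn Λ V} (g : X.top j →ₗ[Λ] B) :
    ∃ f : RepHom X (Repn.skyscraper j B), ∀ x h, f.app j x h = g (Submodule.Quotient.mk x) := by
  classical
  refine ⟨⟨fun k => LinearMap.pi fun h => h.down ▸ g ∘ₗ Submodule.mkQ _, fun {i k} a =>
    LinearMap.ext fun x => funext fun h => ?_⟩, fun x h => rfl⟩
  obtain rfl := h.down
  have hx : (Submodule.Quotient.mk (X.h a x) : X.top k) = 0 :=
    (Submodule.Quotient.mk_eq_zero _).2 ⟨_, X.inMap_single k ⟨i, a⟩ x⟩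
  exact ((congrArg g hx).trans (map_zero g)).symm

theorem injective_of_retract_top (hΛ : HasEnoughFGInjectives Λ) (hV : IsAcyclic V)
    (hF : PhiFaithful Λ V) (hj : ∀ k, IsEmpty (j ⟶ k)) [Module.Finite Λ B] {X : Repn Λ V}
    (hX : X.InMono) {g : X.top j →ₗ[Λ] B} (hg : FactorsThroughInj Λ (g ∘ₗ Submodule.mkQ _))
    {s : B →ₗ[Λ] X.top j} (hgs : g ∘ₗ s = LinearMap.id) : Module.Injective Λ B := by
  obtain ⟨f, hf⟩ := exists_repHom_skyscraper g
  have hf0 : StFamEq f.app (0 : RepHom X (Repn.skyscraper j B)).app := fun k => by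
    change FactorsThroughInj Λ (f.app k - 0)
    rw [sub_zero]
    by_cases hk : k = j
    · subst hk
      have hfk : f.app k = (LinearMap.pi fun _ => LinearMap.id) ∘ₗ g ∘ₗ Submodule.mkQ _ :=
        LinearMap.ext fun x => funext (hf x)
      exact hfk ▸ hg.comp_left _
    · have hfk : f.app k = 0 := LinearMap.ext fun x => funext fun h => (hk h.down).elim
      exact hfk ▸ FactorsThroughInj.zero
  obtain ⟨Z, hZ, hZ', u, v, huv⟩ := hF X _ hX (Repn.skyscraper_inMono hj) f 0 hf0
  have := injective_top hΛ hV hZ hZ' j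
  let r : Z.top j →ₗ[Λ] B :=
    (LinearMap.range (Z.inMap j)).liftQ (LinearMap.proj ⟨rfl⟩ ∘ₗ v.app j) <| by
      rintro _ ⟨y, rfl⟩
      exact congrFun ((v.app_inMap j y).trans (LinearMap.congr_fun (Repn.inMap_skyscraper j) _)) _
  have hr (c : X.top j) : r (u.mapTop j c) = g c := by
    obtain ⟨x, rfl⟩ := Submodule.Quotient.mk_surjective _ c
    have hvu : v.app j (u.app j x) = f.app j x :=
      (LinearMap.congr_fun (huv j) x).trans (sub_zero _)
    exact (congrFun hvu ⟨rfl⟩).trans (hf x _)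
  exact injective_of_retract (u.mapTop j ∘ₗ s) r
    (LinearMap.ext fun b => (hr (s b)).trans (LinearMap.congr_fun hgs b))

end Skyscraper

theorem injective_quotient_of_phiFaithful [IsNoetherianRing Λ] (hΛ : HasEnoughFGInjectives Λ)
    (hV : IsAcyclic V) (hF : PhiFaithful Λ V) {i j : V} (a : i ⟶ j) (hj : ∀ k, IsEmpty (j ⟶ k))
    {E : Type} [AddCommGroup E] [Module Λ E] [Module.Injective Λ E] [Module.Finite Λ E]
    (K : Submodule Λ E) : Module.Injective Λ (E ⧸ K) := by
  classical
  obtain ⟨W, ⟨F⟩⟩ := exists_freeOn (Λ := Λ) (fun _ : V => E) hV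
  have hW : W.InMono := ⟨F.fg hV, F.isMonoRep⟩
  let N (k : V) : Submodule Λ (W.M k) := K.comap (F.proj k)
  have hN {k l : V} (b : k ⟶ l) : N k ≤ (N l).comap (W.h b) := fun x _ =>
    show F.proj l (W.h b x) ∈ K from F.proj_h b x ▸ K.zero_mem
  let X : Repn Λ V := W.sub N hN
  -- The summand `E` of `W_i` meets `X_i` in `K`, so along `a` it contributes `E ⧸ K` to the top at
  -- `j`. Before passing to the top, the projection onto this summand factors through `E`.
  let q : X.M j →ₗ[Λ] E := F.proj i ∘ₗ F.component a ∘ₗ (N j).subtype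
  let g : X.top j →ₗ[Λ] E ⧸ K := (LinearMap.range (X.inMap j)).liftQ (K.mkQ ∘ₗ q) <| by
    rintro _ ⟨y, rfl⟩
    refine (Submodule.Quotient.mk_eq_zero K).2 ?_
    have hy : q (X.inMap j y) = F.proj i (y ⟨i, a⟩).1 := congrArg (F.proj i) <|
      (congrArg _ ((W.subι N hN).app_inMap j y)).trans (F.component_inMap a _)
    exact hy ▸ (y ⟨i, a⟩).2
  let t : E →ₗ[Λ] X.M j := (W.h a ∘ₗ F.incl i).codRestrict (N j) fun e =>
    show F.proj j (W.h a (F.incl i e)) ∈ K from F.proj_h a _ ▸ K.zero_mem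
  let s : E ⧸ K →ₗ[Λ] X.top j := K.liftQ (Submodule.mkQ _ ∘ₗ t) fun e he => by
    have heN : F.proj i (F.incl i e) ∈ K := (F.proj_incl i e).symm ▸ he
    exact (Submodule.Quotient.mk_eq_zero _).2 ⟨_, X.inMap_single j ⟨i, a⟩ ⟨F.incl i e, heN⟩⟩
  refine injective_of_retract_top hΛ hV hF hj (hW.sub N hN) (g := g) (s := s)
    (FactorsThroughInj.of_injective q K.mkQ)
    (Submodule.linearMap_qext K (LinearMap.ext fun e => ?_))
  have he : q (t e) = e := (congrArg (F.proj i) (F.component_h a _)).trans (F.proj_incl i e)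
  exact congrArg K.mkQ he

theorem hereditary_of_phiFaithful [IsNoetherianRing Λ] (hΛ : HasEnoughFGInjectives Λ)
    (hV : IsAcyclic V) (hne : ∃ i j : V, Nonempty (i ⟶ j)) (hF : PhiFaithful Λ V)
    (I : Submodule Λ Λ) : Module.Projective Λ I := by
  obtain ⟨i, j, ⟨a⟩, hj⟩ := hV.exists_hom_sink hne
  exact projective_of_quotients_injective hΛ
    (fun E _ _ _ _ K => injective_quotient_of_phiFaithful hΛ hV hF a hj K) I

end Converse

theorem epivalence_to_stable_representations_general
    (V : Type) [Quiver.{1} V] [Fintype V] [∀ i j : V, Fintype (i ⟶ j)] (hV : IsAcyclic V)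
    (Λ : Type) [Ring Λ] [IsNoetherianRing Λ] (hΛ : HasEnoughFGInjectives Λ) :
    PhiFull Λ V ∧ PhiDense Λ V ∧ PhiReflectsIsos Λ V ∧
    ((∃ i j : V, Nonempty (i ⟶ j)) →
      ((PhiFull Λ V ∧ PhiDense Λ V ∧ PhiFaithful Λ V) ↔
        ∀ I : Submodule Λ Λ, Module.Projective Λ I)) := by
  have hfull : PhiFull Λ V := fun X Y hX _ φ => φ.exists_stFamEq hV hX.2
  have hdense : PhiDense Λ V := phiDense hΛ hV
  refine ⟨hfull, hdense, phiReflectsIsos hΛ hV, fun hne => ⟨fun h => ?_, fun h => ?_⟩⟩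
  · exact hereditary_of_phiFaithful hΛ hV hne h.2.2
  · exact ⟨hfull, hdense, phiFaithful_of_hereditary hV h⟩

end QuivRep

open QuivRep in
/-- Let `Q` be a finite acyclic quiver and `Λ` an Artin algebra.  The
composite `mono(Q,Λ) → rep(Q, mod Λ) → rep(Q, stable-mod Λ)` induces a functor `Φ` from the
injectively stable category of `mono(Q,Λ)` to `rep(Q, stable-mod Λ)` which is an epivalence:
it is full, dense and reflects isomorphisms.  Moreover, if `Q` has at least one arrow, then
`Φ` is an equivalence (equivalently, in addition faithful) if and only if `Λ` has global
dimension at most `1` (every left ideal of `Λ` is projective). -/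
theorem epivalence_to_stable_representations
    (V : Type) [Quiver.{1} V] [Fintype V] [∀ i j : V, Fintype (i ⟶ j)]
    (hacyc : IsAcyclic V)
    (R : Type) [CommRing R] [IsArtinianRing R]
    (Λ : Type) [Ring Λ] [Algebra R Λ] [Module.Finite R Λ] :
    PhiFull Λ V ∧ PhiDense Λ V ∧ PhiReflectsIsos Λ V ∧
    ((∃ i j : V, Nonempty (i ⟶ j)) →
      ((PhiFull Λ V ∧ PhiDense Λ V ∧ PhiFaithful Λ V) ↔
        ∀ I : Submodule Λ Λ, Module.Projective Λ I)) := by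
  have : IsArtinianRing Λ := IsArtinianRing.of_finite R Λ
  exact epivalence_to_stable_representations_general V hacyc Λ
    (hasEnoughFGInjectives_of_isArtinianRing R Λ)
end

section
/- The category V_p^n of p-valuated abelian groups with valuation bounded by n−1 is quasi-abelian. Furthermore: (1) a morphism φ: B → B′ in V_p^n is a kernel if and only if φ is injective and v(φ(x)) = v(x) for all x ∈ B, if and only if φ is injective and the square with vertices B(i), B′(i), B(0), B′(0) is a pullback for each 0 ≤ i ≤ n; (2) φ is a cokernel if and only if φ is surjective and every x′ ∈ B′ has a preimage x with v(x) = v(x′), if and only if φ(i): B(i) → B′(i) is surjective for each 0 ≤ i ≤ n; (3) a sequence B → B′ → B″ in V_p^n is a kernel-cokernel pair if and only if 0 → B(i) → B′(i) → B″(i) → 0 is a short exact sequence of abelian groups for all 0 ≤ i ≤ n. -/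
namespace PVal

/-- A `p`-valuated abelian group whose nonzero elements have value at most `n-1`:
an object of the category `𝒱ₚⁿ`. -/
structure ValGroup (p n : ℕ) where
  B : Type
  [acg : AddCommGroup B]
  v : B → ℕ∞
  add_le : ∀ x y : B, min (v x) (v y) ≤ v (x + y)
  smul_lt : ∀ x : B, v x < v (p • x) ∨ (v x = ⊤ ∧ v (p • x) = ⊤)
  bounded : ∀ x : B, x ≠ 0 → v x ≤ ((n - 1 : ℕ) : ℕ∞)

attribute [instance] ValGroup.acg

/-- A morphism of `p`-valuated abelian groups. -/
@[ext]
structure ValHom {p n : ℕ} (A B : ValGroup p n) where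
  f : A.B →+ B.B
  le : ∀ x, A.v x ≤ B.v (f x)

theorem ValGroup.v_zero {p n : ℕ} (A : ValGroup p n) : A.v 0 = ⊤ := by
  rcases A.smul_lt 0 with h | h
  · rw [smul_zero] at h
    exact absurd h (lt_irrefl _)
  · exact h.1

namespace ValHom

variable {p n : ℕ} {A B C D : ValGroup p n}

def id (A : ValGroup p n) : ValHom A A :=
  ⟨AddMonoidHom.id A.B, fun _ => le_rfl⟩

def comp (g : ValHom B C) (f : ValHom A B) : ValHom A C :=
  ⟨g.f.comp f.f, fun x => (f.le x).trans (g.le (f.f x))⟩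

instance : Zero (ValHom A B) :=
  ⟨⟨0, fun x => by simp [ValGroup.v_zero]⟩⟩

end ValHom

variable {p n : ℕ}

/-- `ι` is a kernel of `ψ`. -/
def IsKernelOf {K A B : ValGroup p n} (ι : ValHom K A) (ψ : ValHom A B) : Prop :=
  ψ.comp ι = 0 ∧
    ∀ (C : ValGroup p n) (ρ : ValHom C A), ψ.comp ρ = 0 →
      ∃! σ : ValHom C K, ι.comp σ = ρ

/-- `π` is a cokernel of `ψ`. -/
def IsCokernelOf {A B Q : ValGroup p n} (π : ValHom B Q) (ψ : ValHom A B) : Prop :=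
  π.comp ψ = 0 ∧
    ∀ (C : ValGroup p n) (ρ : ValHom B C), ρ.comp ψ = 0 →
      ∃! σ : ValHom Q C, σ.comp π = ρ

/-- A morphism which occurs as a kernel. -/
def IsKernelMor {A B : ValGroup p n} (φ : ValHom A B) : Prop :=
  ∃ (C : ValGroup p n) (ψ : ValHom B C), IsKernelOf φ ψ

/-- A morphism which occurs as a cokernel. -/
def IsCokernelMor {A B : ValGroup p n} (φ : ValHom A B) : Prop :=
  ∃ (C : ValGroup p n) (ψ : ValHom C A), IsCokernelOf φ ψ

/-- A kernel–cokernel pair (conflation). -/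
def IsConflation {A B C : ValGroup p n} (φ : ValHom A B) (ψ : ValHom B C) : Prop :=
  IsKernelOf φ ψ ∧ IsCokernelOf ψ φ

end PVal

/-!
A kernel of `ψ` is the subgroup `ker ψ` with the restricted valuation, and a cokernel of `φ` is the
quotient by `range φ` in which a coset takes the largest value of its elements; this maximum is
attained because a valuation bounded by `n - 1` takes only finitely many values. Hence the kernels
are the morphisms that preserve values, and the cokernels those along which every element lifts to
an element of the same value.

The one axiom of an exact structure that needs an argument is that pushouts preserve kernels: an
element of the class of `(0, c)` in the pushout of `ι` and `f` is of the form `(ι a, c - f a)`, and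
its value is at most `min (v (f a)) (v (c - f a)) ≤ v c`.
-/

namespace PVal

variable {p n : ℕ}

namespace ValGroup

variable (A : ValGroup p n)

@[simp]
theorem v_eq_top_iff {x : A.B} : A.v x = ⊤ ↔ x = 0 := by
  refine ⟨fun hx => by_contra fun hx0 => ?_, fun hx => hx ▸ A.v_zero⟩
  exact ENat.natCast_ne_top _ (top_le_iff.1 (hx ▸ A.bounded x hx0))

theorem exists_v_eq_natCast {x : A.B} (hx : x ≠ 0) : ∃ k : ℕ, k ≤ n - 1 ∧ A.v x = k := by
  obtain ⟨k, hk⟩ := ENat.ne_top_iff_exists.1 (mt A.v_eq_top_iff.1 hx)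
  exact ⟨k, by exact_mod_cast hk.trans_le (A.bounded x hx), hk.symm⟩

theorem finite_range_v : (Set.range A.v).Finite := by
  refine (((Set.finite_Iic (n - 1)).image ((↑) : ℕ → ℕ∞)).insert ⊤).subset ?_
  rintro _ ⟨x, rfl⟩
  by_cases hx : x = 0
  · exact .inl (A.v_eq_top_iff.2 hx)
  · obtain ⟨k, hk, hv⟩ := A.exists_v_eq_natCast hx
    exact .inr ⟨k, hk, hv.symm⟩

theorem eq_zero_of_le_v (hn : 1 ≤ n) {x : A.B} (hx : (n : ℕ∞) ≤ A.v x) : x = 0 := by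
  by_contra hx0
  obtain ⟨k, hk, hv⟩ := A.exists_v_eq_natCast hx0
  have hnk : n ≤ k := by exact_mod_cast hv ▸ hx
  lia

theorem le_v_iff_forall_natCast_le (hn : 1 ≤ n) {x : A.B} {a : ℕ∞} :
    a ≤ A.v x ↔ ∀ i : ℕ, i ≤ n → (i : ℕ∞) ≤ a → (i : ℕ∞) ≤ A.v x := by
  refine ⟨fun h i _ hi => hi.trans h, fun h => ENat.forall_natCast_le_iff_le.1 fun i hi => ?_⟩
  obtain hin | hni := le_total i n
  · exact h i hin hi
  · have hx : x = 0 := A.eq_zero_of_le_v hn (h n le_rfl ((Nat.cast_le.2 hni).trans hi))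
    exact hx ▸ A.v_zero ▸ le_top

/-- A subgroup with the restricted valuation: the kernel object of a morphism. -/
def ofSubgroup (N : AddSubgroup A.B) : ValGroup p n where
  B := N
  v x := A.v x
  add_le x y := A.add_le x y
  smul_lt x := A.smul_lt x
  bounded x hx := A.bounded x (by simpa using hx)

/-- The inclusion of a subgroup that carries the restricted valuation. -/
def subtype (N : AddSubgroup A.B) : ValHom (A.ofSubgroup N) A where
  f := N.subtype
  le _ := le_rfl

section Quotient

variable (N : AddSubgroup A.B)

/-- The quotient valuation: a coset takes the largest value of its elements. -/
noncomputable def quotientV (y : A.B ⧸ N) : ℕ∞ :=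
  sSup (A.v '' {x | (x : A.B ⧸ N) = y})

theorem le_quotientV_mk (x : A.B) : A.v x ≤ A.quotientV N x :=
  le_sSup ⟨x, rfl, rfl⟩

theorem exists_mk_eq_v_eq_quotientV (y : A.B ⧸ N) :
    ∃ x : A.B, (x : A.B ⧸ N) = y ∧ A.v x = A.quotientV N y := by
  have hne : {x : A.B | (x : A.B ⧸ N) = y}.Nonempty := QuotientAddGroup.mk_surjective y
  exact (hne.image A.v).csSup_mem (A.finite_range_v.subset (Set.image_subset_range _ _))

/-- The quotient group with the quotient valuation: the cokernel object of a morphism with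
range `N`. -/
noncomputable def quotient : ValGroup p n where
  B := A.B ⧸ N
  v := A.quotientV N
  add_le y z := by
    obtain ⟨a, rfl, ha⟩ := A.exists_mk_eq_v_eq_quotientV N y
    obtain ⟨b, rfl, hb⟩ := A.exists_mk_eq_v_eq_quotientV N z
    rw [← ha, ← hb]
    exact (A.add_le a b).trans (A.le_quotientV_mk N (a + b))
  smul_lt y := by
    obtain ⟨a, rfl, ha⟩ := A.exists_mk_eq_v_eq_quotientV N y
    have hle : A.v (p • a) ≤ A.quotientV N (p • (a : A.B ⧸ N)) := A.le_quotientV_mk N (p • a)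
    rw [← ha]
    exact (A.smul_lt a).imp (·.trans_le hle)
      (And.imp_right fun h => top_le_iff.1 (h.symm.trans_le hle))
  bounded y hy := by
    obtain ⟨a, rfl, ha⟩ := A.exists_mk_eq_v_eq_quotientV N y
    rw [← ha]
    exact A.bounded a fun h => hy (h ▸ QuotientAddGroup.mk_zero N)

/-- The projection onto the quotient with the quotient valuation. -/
noncomputable def quotientMap : ValHom A (A.quotient N) where
  f := QuotientAddGroup.mk' N
  le := A.le_quotientV_mk N

theorem quotientMap_eq_zero_iff {x : A.B} : (A.quotientMap N).f x = 0 ↔ x ∈ N :=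
  QuotientAddGroup.eq_zero_iff x

theorem quotientMap_eq_iff {x y : A.B} :
    (A.quotientMap N).f x = (A.quotientMap N).f y ↔ x - y ∈ N :=
  QuotientAddGroup.eq_iff_sub_mem

end Quotient

/-- The biproduct: the product group with the minimum of the two valuations. -/
noncomputable def prod (A B : ValGroup p n) : ValGroup p n where
  B := A.B × B.B
  v x := min (A.v x.1) (B.v x.2)
  add_le x y := by
    refine le_min (le_trans ?_ (A.add_le _ _)) (le_trans ?_ (B.add_le _ _))
    · exact min_le_min (min_le_left _ _) (min_le_left _ _)
    · exact min_le_min (min_le_right _ _) (min_le_right _ _)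
  smul_lt x := by
    obtain h₁ | ⟨h₁, h₁'⟩ := A.smul_lt x.1 <;> obtain h₂ | ⟨h₂, h₂'⟩ := B.smul_lt x.2
    · exact .inl (min_lt_min h₁ h₂)
    · exact .inl (by simpa [h₂, h₂'] using h₁)
    · exact .inl (by simpa [h₁, h₁'] using h₂)
    · exact .inr (by simp [h₁, h₁', h₂, h₂'])
  bounded x hx := by
    by_cases h₁ : x.1 = 0
    · exact (min_le_right _ _).trans (B.bounded _ fun h₂ => hx (Prod.ext h₁ h₂))
    · exact (min_le_left _ _).trans (A.bounded _ h₁)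

end ValGroup

namespace ValHom

variable {A B C D K K' Q Q' : ValGroup p n}

theorem hom_ext {φ ψ : ValHom A B} (h : ∀ x, φ.f x = ψ.f x) : φ = ψ :=
  ValHom.ext (AddMonoidHom.ext h)

theorem congr_f {φ ψ : ValHom A B} (h : φ = ψ) (x : A.B) : φ.f x = ψ.f x :=
  h ▸ rfl

theorem comp_apply (ψ : ValHom B C) (φ : ValHom A B) (x : A.B) :
    (ψ.comp φ).f x = ψ.f (φ.f x) := rfl

/-! ### Morphisms preserving or lifting values -/

/-- The morphism is isometric. Injectivity is automatic because `v x = ⊤` only for `x = 0`. -/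
def PreservesValue (φ : ValHom A B) : Prop :=
  ∀ x, B.v (φ.f x) = A.v x

/-- Every element of the target has a preimage of the same value; this includes surjectivity. -/
def LiftsValue (φ : ValHom A B) : Prop :=
  ∀ y, ∃ x, φ.f x = y ∧ A.v x = B.v y

namespace PreservesValue

variable {φ : ValHom A B}

theorem injective (hφ : φ.PreservesValue) : Function.Injective φ.f := by
  refine (injective_iff_map_eq_zero φ.f).2 fun x hx => A.v_eq_top_iff.1 ?_
  rw [← hφ x, hx, B.v_zero]

protected theorem id (A : ValGroup p n) : (ValHom.id A).PreservesValue :=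
  fun _ => rfl

protected theorem comp {ψ : ValHom B C} (hψ : ψ.PreservesValue) (hφ : φ.PreservesValue) :
    (ψ.comp φ).PreservesValue :=
  fun x => (hψ (φ.f x)).trans (hφ x)

theorem subtype (A : ValGroup p n) (N : AddSubgroup A.B) : (A.subtype N).PreservesValue :=
  fun _ => rfl

theorem of_comp_eq_id {ψ : ValHom B A} (h : ψ.comp φ = ValHom.id A) : φ.PreservesValue :=
  fun x => ((ψ.le (φ.f x)).trans_eq (congrArg A.v (congr_f h x))).antisymm (φ.le x)

theorem existsUnique_comp_eq (hφ : φ.PreservesValue) (ρ : ValHom D B)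
    (hρ : ∀ x, ρ.f x ∈ φ.f.range) : ∃! σ : ValHom D A, φ.comp σ = ρ := by
  let e := AddMonoidHom.ofInjective hφ.injective
  let σ : D.B →+ A.B := e.symm.toAddMonoidHom.comp (ρ.f.codRestrict φ.f.range hρ)
  have hσ (x) : φ.f (σ x) = ρ.f x := AddMonoidHom.apply_ofInjective_symm hφ.injective _
  refine ⟨⟨σ, fun x => ?_⟩, hom_ext hσ, fun τ hτ => hom_ext fun x => hφ.injective ?_⟩
  · rw [← hφ, hσ]
    exact ρ.le x
  · exact (congr_f hτ x).trans (hσ x).symm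

theorem isKernelOf (hφ : φ.PreservesValue) {ψ : ValHom B C} (h : Function.Exact φ.f ψ.f) :
    IsKernelOf φ ψ :=
  ⟨hom_ext h.apply_apply_eq_zero, fun _ ρ hρ =>
    hφ.existsUnique_comp_eq ρ fun x => (h _).1 (congr_f hρ x)⟩

end PreservesValue

theorem preservesValue_iff_forall_le (hn : 1 ≤ n) (φ : ValHom A B) :
    φ.PreservesValue ↔
      ∀ i : ℕ, i ≤ n → ∀ x, (i : ℕ∞) ≤ B.v (φ.f x) → (i : ℕ∞) ≤ A.v x := by
  refine ⟨fun h i _ x hx => h x ▸ hx, fun h x => le_antisymm ?_ (φ.le x)⟩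
  exact (A.le_v_iff_forall_natCast_le hn).2 fun i hi => h i hi x

namespace LiftsValue

variable {ψ : ValHom B C}

theorem surjective (hψ : ψ.LiftsValue) : Function.Surjective ψ.f :=
  fun z => (hψ z).imp fun _ h => h.1

protected theorem id (A : ValGroup p n) : (ValHom.id A).LiftsValue :=
  fun x => ⟨x, rfl, rfl⟩

protected theorem comp {φ : ValHom A B} (hψ : ψ.LiftsValue) (hφ : φ.LiftsValue) :
    (ψ.comp φ).LiftsValue := by
  intro z
  obtain ⟨y, rfl, hy⟩ := hψ z
  obtain ⟨x, rfl, hx⟩ := hφ y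
  exact ⟨x, rfl, hx.trans hy⟩

theorem quotientMap (A : ValGroup p n) (N : AddSubgroup A.B) : (A.quotientMap N).LiftsValue :=
  A.exists_mk_eq_v_eq_quotientV N

theorem of_comp_eq_id {φ : ValHom C B} (h : ψ.comp φ = ValHom.id C) : ψ.LiftsValue :=
  fun z => ⟨φ.f z, congr_f h z,
    ((ψ.le (φ.f z)).trans_eq (congrArg C.v (congr_f h z))).antisymm (φ.le z)⟩

theorem existsUnique_comp_eq (hψ : ψ.LiftsValue) (ρ : ValHom B D) (hρ : ψ.f.ker ≤ ρ.f.ker) :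
    ∃! σ : ValHom C D, σ.comp ψ = ρ := by
  let σ : C.B →+ D.B := ψ.f.liftOfSurjective hψ.surjective ⟨ρ.f, hρ⟩
  have hσ (x) : σ (ψ.f x) = ρ.f x := ψ.f.liftOfRightInverse_comp_apply _ _ ⟨ρ.f, hρ⟩ x
  refine ⟨⟨σ, fun z => ?_⟩, hom_ext hσ, fun τ hτ => hom_ext fun z => ?_⟩
  · obtain ⟨x, rfl, hx⟩ := hψ z
    rw [← hx, hσ]
    exact ρ.le x
  · obtain ⟨x, rfl⟩ := hψ.surjective z
    exact (congr_f hτ x).trans (hσ x).symm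

theorem isCokernelOf (hψ : ψ.LiftsValue) {φ : ValHom A B} (h : Function.Exact φ.f ψ.f) :
    IsCokernelOf ψ φ := by
  refine ⟨hom_ext h.apply_apply_eq_zero, fun _ ρ hρ => hψ.existsUnique_comp_eq ρ fun y hy => ?_⟩
  obtain ⟨x, rfl⟩ := (h y).1 hy
  exact congr_f hρ x

end LiftsValue

theorem liftsValue_iff_forall_exists (φ : ValHom A B) :
    φ.LiftsValue ↔
      ∀ i : ℕ, i ≤ n → ∀ y, (i : ℕ∞) ≤ B.v y → ∃ x, φ.f x = y ∧ (i : ℕ∞) ≤ A.v x := by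
  refine ⟨fun h i _ y hy => (h y).imp fun _ hx => ⟨hx.1, hy.trans_eq hx.2.symm⟩, fun h y => ?_⟩
  by_cases hy : y = 0
  · exact ⟨0, by rw [map_zero, hy], by rw [hy, A.v_zero, B.v_zero]⟩
  · obtain ⟨k, hk, hv⟩ := B.exists_v_eq_natCast hy
    obtain ⟨x, rfl, hx⟩ := h k (hk.trans (Nat.sub_le n 1)) y hv.ge
    exact ⟨x, rfl, (φ.le x).antisymm (hv.trans_le hx)⟩

end ValHom

open ValHom

variable {A B C D K K' Q Q' : ValGroup p n}

/-! ### Kernels and cokernels -/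

theorem exact_subtype_ker (ψ : ValHom B C) : Function.Exact (B.subtype ψ.f.ker).f ψ.f :=
  fun y => ⟨fun hy => ⟨⟨y, hy⟩, rfl⟩, fun ⟨x, hx⟩ => hx ▸ x.2⟩

theorem exact_quotientMap_range (φ : ValHom A B) : Function.Exact φ.f (B.quotientMap φ.f.range).f :=
  fun _ => B.quotientMap_eq_zero_iff φ.f.range

theorem isKernelOf_subtype_ker (ψ : ValHom B C) : IsKernelOf (B.subtype ψ.f.ker) ψ :=
  (PreservesValue.subtype B _).isKernelOf (exact_subtype_ker ψ)

theorem isCokernelOf_quotientMap_range (φ : ValHom A B) :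
    IsCokernelOf (B.quotientMap φ.f.range) φ :=
  (LiftsValue.quotientMap B _).isCokernelOf (exact_quotientMap_range φ)

theorem IsKernelOf.exists_comp_eq {ι : ValHom K A} {ι' : ValHom K' A} {ψ : ValHom A B}
    (h : IsKernelOf ι ψ) (h' : IsKernelOf ι' ψ) :
    ∃ (σ : ValHom K' K) (τ : ValHom K K'),
      ι.comp σ = ι' ∧ ι'.comp τ = ι ∧ σ.comp τ = ValHom.id K := by
  obtain ⟨σ, rfl, -⟩ := h.2 K' ι' h'.1
  obtain ⟨τ, hτ, -⟩ := h'.2 K ι h.1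
  exact ⟨σ, τ, rfl, hτ, (h.2 K ι h.1).unique hτ rfl⟩

theorem IsCokernelOf.exists_comp_eq {π : ValHom B Q} {π' : ValHom B Q'} {φ : ValHom A B}
    (h : IsCokernelOf π φ) (h' : IsCokernelOf π' φ) :
    ∃ (σ : ValHom Q Q') (τ : ValHom Q' Q),
      σ.comp π = π' ∧ τ.comp π' = π ∧ τ.comp σ = ValHom.id Q := by
  obtain ⟨σ, rfl, -⟩ := h.2 Q' π' h'.1
  obtain ⟨τ, hτ, -⟩ := h'.2 Q π h.1
  exact ⟨σ, τ, rfl, hτ, (h.2 Q π h.1).unique hτ rfl⟩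

theorem isKernelOf_iff {φ : ValHom A B} {ψ : ValHom B C} :
    IsKernelOf φ ψ ↔ φ.PreservesValue ∧ Function.Exact φ.f ψ.f := by
  refine ⟨fun h => ?_, fun h => h.1.isKernelOf h.2⟩
  obtain ⟨σ, τ, hσ, hτ, hid⟩ := h.exists_comp_eq (isKernelOf_subtype_ker ψ)
  refine ⟨hτ ▸ (PreservesValue.subtype B _).comp (.of_comp_eq_id hid), fun y => ⟨fun hy => ?_, ?_⟩⟩
  · exact ⟨σ.f ⟨y, hy⟩, congr_f hσ ⟨y, hy⟩⟩
  · rintro ⟨x, rfl⟩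
    exact congr_f h.1 x

theorem isCokernelOf_iff {φ : ValHom A B} {ψ : ValHom B C} :
    IsCokernelOf ψ φ ↔ ψ.LiftsValue ∧ Function.Exact φ.f ψ.f := by
  refine ⟨fun h => ?_, fun h => h.1.isCokernelOf h.2⟩
  obtain ⟨σ, τ, hσ, hτ, hid⟩ := h.exists_comp_eq (isCokernelOf_quotientMap_range φ)
  refine ⟨hτ ▸ .comp (.of_comp_eq_id hid) (LiftsValue.quotientMap B _), fun y => ⟨fun hy => ?_, ?_⟩⟩
  · refine (B.quotientMap_eq_zero_iff φ.f.range).1 ?_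
    rw [← congr_f hσ, comp_apply, hy, map_zero]
  · rintro ⟨x, rfl⟩
    exact congr_f h.1 x

theorem isKernelMor_iff {φ : ValHom A B} : IsKernelMor φ ↔ φ.PreservesValue :=
  ⟨fun ⟨_, _, h⟩ => (isKernelOf_iff.1 h).1,
    fun h => ⟨_, _, h.isKernelOf (exact_quotientMap_range φ)⟩⟩

theorem isCokernelMor_iff {ψ : ValHom B C} : IsCokernelMor ψ ↔ ψ.LiftsValue :=
  ⟨fun ⟨_, _, h⟩ => (isCokernelOf_iff.1 h).1,
    fun h => ⟨_, _, h.isCokernelOf (exact_subtype_ker ψ)⟩⟩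

theorem isKernelMor_iff_injective_and_preservesValue {φ : ValHom A B} :
    IsKernelMor φ ↔ Function.Injective φ.f ∧ φ.PreservesValue :=
  isKernelMor_iff.trans ⟨fun h => ⟨h.injective, h⟩, And.right⟩

theorem isKernelMor_iff_injective_and_forall_le (hn : 1 ≤ n) {φ : ValHom A B} :
    IsKernelMor φ ↔ Function.Injective φ.f ∧
      ∀ i : ℕ, i ≤ n → ∀ x, (i : ℕ∞) ≤ B.v (φ.f x) → (i : ℕ∞) ≤ A.v x := by
  rw [← preservesValue_iff_forall_le hn, isKernelMor_iff_injective_and_preservesValue]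

theorem isCokernelMor_iff_surjective_and_liftsValue {ψ : ValHom B C} :
    IsCokernelMor ψ ↔ Function.Surjective ψ.f ∧ ψ.LiftsValue :=
  isCokernelMor_iff.trans ⟨fun h => ⟨h.surjective, h⟩, And.right⟩

theorem isCokernelMor_iff_forall_exists {φ : ValHom A B} :
    IsCokernelMor φ ↔
      ∀ i : ℕ, i ≤ n → ∀ y, (i : ℕ∞) ≤ B.v y → ∃ x, φ.f x = y ∧ (i : ℕ∞) ≤ A.v x :=
  isCokernelMor_iff.trans (liftsValue_iff_forall_exists φ)

theorem isKernelMor_id (A : ValGroup p n) : IsKernelMor (ValHom.id A) :=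
  isKernelMor_iff.2 (.id A)

theorem isCokernelMor_id (A : ValGroup p n) : IsCokernelMor (ValHom.id A) :=
  isCokernelMor_iff.2 (.id A)

theorem IsKernelMor.comp {ψ : ValHom B C} {φ : ValHom A B} (hψ : IsKernelMor ψ)
    (hφ : IsKernelMor φ) : IsKernelMor (ψ.comp φ) :=
  isKernelMor_iff.2 ((isKernelMor_iff.1 hψ).comp (isKernelMor_iff.1 hφ))

theorem IsCokernelMor.comp {ψ : ValHom B C} {φ : ValHom A B} (hψ : IsCokernelMor ψ)
    (hφ : IsCokernelMor φ) : IsCokernelMor (ψ.comp φ) :=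
  isCokernelMor_iff.2 ((isCokernelMor_iff.1 hψ).comp (isCokernelMor_iff.1 hφ))

/-! ### Kernel–cokernel pairs -/

/-- The sequence `0 → A(i) → B(i) → C(i) → 0` induced by `φ` and `ψ` is short exact, where
`A(i)` consists of the elements of value at least `i`. The four conditions are exactness at
`A(i)`, the inclusions of image in kernel and of kernel in image at `B(i)`, and exactness
at `C(i)`. -/
def IsShortExactAt (i : ℕ) (φ : ValHom A B) (ψ : ValHom B C) : Prop :=
  (∀ x : A.B, (i : ℕ∞) ≤ A.v x → φ.f x = 0 → x = 0) ∧
  (∀ x : A.B, (i : ℕ∞) ≤ A.v x → ψ.f (φ.f x) = 0) ∧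
  (∀ y : B.B, (i : ℕ∞) ≤ B.v y → ψ.f y = 0 → ∃ x : A.B, (i : ℕ∞) ≤ A.v x ∧ φ.f x = y) ∧
  (∀ z : C.B, (i : ℕ∞) ≤ C.v z → ∃ y : B.B, (i : ℕ∞) ≤ B.v y ∧ ψ.f y = z)

theorem isShortExactAt_zero_iff {φ : ValHom A B} {ψ : ValHom B C} :
    IsShortExactAt 0 φ ψ ↔
      Function.Injective φ.f ∧ Function.Exact φ.f ψ.f ∧ Function.Surjective ψ.f := by
  simp only [IsShortExactAt, Nat.cast_zero, zero_le, forall_const, true_and,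
    injective_iff_map_eq_zero]
  refine and_congr_right fun _ => ?_
  rw [← and_assoc]
  refine and_congr_left fun _ => ⟨fun h y => ⟨h.2 y, ?_⟩, fun h => ⟨?_, fun y => (h y).1⟩⟩
  · rintro ⟨x, rfl⟩
    exact h.1 x
  · exact h.apply_apply_eq_zero

theorem isConflation_iff {φ : ValHom A B} {ψ : ValHom B C} :
    IsConflation φ ψ ↔ φ.PreservesValue ∧ ψ.LiftsValue ∧ Function.Exact φ.f ψ.f := by
  rw [IsConflation, isKernelOf_iff, isCokernelOf_iff]
  tauto

theorem IsConflation.isShortExactAt {φ : ValHom A B} {ψ : ValHom B C} (h : IsConflation φ ψ)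
    (i : ℕ) : IsShortExactAt i φ ψ := by
  obtain ⟨hφ, hψ, hex⟩ := isConflation_iff.1 h
  refine ⟨fun x _ hx => hφ.injective (hx.trans (map_zero φ.f).symm),
    fun x _ => hex.apply_apply_eq_zero x, fun y hy hy0 => ?_, fun z hz => ?_⟩
  · obtain ⟨x, rfl⟩ := (hex y).1 hy0
    exact ⟨x, hφ x ▸ hy, rfl⟩
  · obtain ⟨y, hyz, hv⟩ := hψ z
    exact ⟨y, hv ▸ hz, hyz⟩

theorem isConflation_iff_forall_isShortExactAt (hn : 1 ≤ n) {φ : ValHom A B} {ψ : ValHom B C} :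
    IsConflation φ ψ ↔ ∀ i : ℕ, i ≤ n → IsShortExactAt i φ ψ := by
  refine ⟨fun h i _ => h.isShortExactAt i, fun h => isConflation_iff.2 ?_⟩
  obtain ⟨hinj, hex, -⟩ := isShortExactAt_zero_iff.1 (h 0 n.zero_le)
  refine ⟨(preservesValue_iff_forall_le hn φ).2 fun i hi x hx => ?_,
    (liftsValue_iff_forall_exists ψ).2 fun i hi z hz => ?_, hex⟩
  · obtain ⟨-, -, hlift, -⟩ := h i hi
    obtain ⟨x', hx', hφ⟩ := hlift (φ.f x) hx (hex.apply_apply_eq_zero x)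
    exact hinj hφ ▸ hx'
  · obtain ⟨-, -, -, hsurj⟩ := h i hi
    exact (hsurj z hz).imp fun _ => And.symm

/-! ### Pushouts and pullbacks -/

namespace ValHom

/-- The first inclusion into the biproduct. -/
def inl (A B : ValGroup p n) : ValHom A (A.prod B) where
  f := AddMonoidHom.inl A.B B.B
  le _ := le_min le_rfl (B.v_zero.symm ▸ le_top)

/-- The second inclusion into the biproduct. -/
def inr (A B : ValGroup p n) : ValHom B (A.prod B) where
  f := AddMonoidHom.inr A.B B.B
  le _ := le_min (A.v_zero.symm ▸ le_top) le_rfl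

/-- The first projection from the biproduct. -/
def fst (A B : ValGroup p n) : ValHom (A.prod B) A where
  f := AddMonoidHom.fst A.B B.B
  le _ := min_le_left _ _

/-- The second projection from the biproduct. -/
def snd (A B : ValGroup p n) : ValHom (A.prod B) B where
  f := AddMonoidHom.snd A.B B.B
  le _ := min_le_right _ _

/-- The morphism into the biproduct with the given components. -/
noncomputable def prod (φ : ValHom D A) (ψ : ValHom D B) : ValHom D (A.prod B) where
  f := φ.f.prod ψ.f
  le x := le_min (φ.le x) (ψ.le x)

/-- The morphism out of the biproduct with the given components. -/
def coprod (φ : ValHom A D) (ψ : ValHom B D) : ValHom (A.prod B) D where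
  f := φ.f.coprod ψ.f
  le x := (min_le_min (φ.le x.1) (ψ.le x.2)).trans (D.add_le _ _)

theorem comp_eq_coprod {φ : ValHom A D} {ψ : ValHom B D} {ρ : ValHom (A.prod B) D}
    (h₁ : ρ.comp (inl A B) = φ) (h₂ : ρ.comp (inr A B) = ψ) : ρ = φ.coprod ψ := by
  subst h₁ h₂
  exact ValHom.ext (AddMonoidHom.coprod_unique ρ.f).symm

section Pushout

/-- The universal property of the pushout of `ι` and `f` for the square `ι' ∘ f = f' ∘ ι`. -/
def PushoutProperty {P : ValGroup p n} (ι : ValHom A B) (f : ValHom A C)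
    (f' : ValHom B P) (ι' : ValHom C P) : Prop :=
  ∀ (D : ValGroup p n) (u : ValHom C D) (w : ValHom B D), u.comp f = w.comp ι →
    ∃! t : ValHom P D, t.comp ι' = u ∧ t.comp f' = w

variable (ι : ValHom A B) (f : ValHom A C)

/-- The subgroup of all `(ι a, -f a)`, by which `B × C` is divided in the pushout. -/
def pushoutRel : AddSubgroup (B.prod C).B :=
  (ι.f.prod (-f.f)).range

/-- The pushout of `ι` and `f`. -/
noncomputable def pushout : ValGroup p n :=
  (B.prod C).quotient (pushoutRel ι f)

/-- The structure morphism of the pushout opposite to `f`. -/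
noncomputable def pushoutInl : ValHom B (pushout ι f) :=
  ((B.prod C).quotientMap (pushoutRel ι f)).comp (inl B C)

/-- The structure morphism of the pushout opposite to `ι`. -/
noncomputable def pushoutInr : ValHom C (pushout ι f) :=
  ((B.prod C).quotientMap (pushoutRel ι f)).comp (inr B C)

theorem pushout_condition : (pushoutInr ι f).comp f = (pushoutInl ι f).comp ι := by
  refine hom_ext fun a => ((B.prod C).quotientMap_eq_iff _).2 ⟨-a, Prod.ext ?_ ?_⟩
  · exact (map_neg ι.f a).trans (zero_sub (ι.f a)).symm
  · change -f.f (-a) = f.f a - 0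
    rw [map_neg, neg_neg, sub_zero]

theorem pushoutProperty_pushout :
    PushoutProperty ι f (pushoutInl ι f) (pushoutInr ι f) := by
  intro D u w huw
  have hker : ((B.prod C).quotientMap (pushoutRel ι f)).f.ker ≤ (w.coprod u).f.ker := by
    intro x hx
    obtain ⟨a, rfl⟩ := ((B.prod C).quotientMap_eq_zero_iff _).1 hx
    change w.f (ι.f a) + u.f (-f.f a) = 0
    rw [map_neg, ← comp_apply w, ← congr_f huw, comp_apply, add_neg_cancel]
  obtain ⟨t, ht, huniq⟩ :=
    (LiftsValue.quotientMap (B.prod C) (pushoutRel ι f)).existsUnique_comp_eq (w.coprod u) hker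
  refine ⟨t, ⟨hom_ext fun c => ?_, hom_ext fun b => ?_⟩, fun t' h => ?_⟩
  · refine (congr_f ht (0, c)).trans ?_
    change w.f 0 + u.f c = u.f c
    rw [map_zero, zero_add]
  · refine (congr_f ht (b, 0)).trans ?_
    change w.f b + u.f 0 = w.f b
    rw [map_zero, add_zero]
  · exact huniq t' (comp_eq_coprod h.2 h.1)

theorem PreservesValue.pushoutInr {ι : ValHom A B} (hι : ι.PreservesValue) (f : ValHom A C) :
    (pushoutInr ι f).PreservesValue := by
  refine fun c => le_antisymm ?_ ((ValHom.pushoutInr ι f).le c)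
  obtain ⟨⟨b, c'⟩, hx, hv⟩ :=
    LiftsValue.quotientMap (B.prod C) (pushoutRel ι f) ((ValHom.pushoutInr ι f).f c)
  obtain ⟨a, ha⟩ := ((B.prod C).quotientMap_eq_iff _).1 hx
  have hb : ι.f a = b := (congrArg Prod.fst ha).trans (sub_zero b)
  have hc : -f.f a = c' - c := congrArg Prod.snd ha
  calc (pushout ι f).v ((ValHom.pushoutInr ι f).f c)
      = min (B.v b) (C.v c') := hv.symm
    _ = min (A.v a) (C.v c') := by rw [← hb, hι]
    _ ≤ min (C.v (f.f a)) (C.v c') := min_le_min_right _ (f.le a)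
    _ ≤ C.v (f.f a + c') := C.add_le _ _
    _ = C.v c := by rw [neg_eq_iff_eq_neg.1 hc, neg_sub, sub_add_cancel]

end Pushout

section Pullback

/-- The universal property of the pullback of `f` and `π` for the square `f ∘ π' = π ∘ f'`. -/
def PullbackProperty {P : ValGroup p n} (f : ValHom C A) (π : ValHom B A)
    (π' : ValHom P C) (f' : ValHom P B) : Prop :=
  ∀ (D : ValGroup p n) (u : ValHom D C) (w : ValHom D B), f.comp u = π.comp w →
    ∃! t : ValHom D P, π'.comp t = u ∧ f'.comp t = w

variable (f : ValHom C A) (π : ValHom B A)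

/-- The subgroup of all `(c, b)` with `f c = π b`. -/
noncomputable def pullbackLocus : AddSubgroup (C.prod B).B :=
  (f.comp (fst C B)).f.eqLocus (π.comp (snd C B)).f

/-- The pullback of `f` and `π`. -/
noncomputable def pullback : ValGroup p n :=
  (C.prod B).ofSubgroup (pullbackLocus f π)

/-- The structure morphism of the pullback opposite to `π`. -/
noncomputable def pullbackFst : ValHom (pullback f π) C :=
  (fst C B).comp ((C.prod B).subtype (pullbackLocus f π))

/-- The structure morphism of the pullback opposite to `f`. -/
noncomputable def pullbackSnd : ValHom (pullback f π) B :=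
  (snd C B).comp ((C.prod B).subtype (pullbackLocus f π))

theorem pullback_condition : f.comp (pullbackFst f π) = π.comp (pullbackSnd f π) :=
  hom_ext fun x => x.2

theorem pullbackProperty_pullback :
    PullbackProperty f π (pullbackFst f π) (pullbackSnd f π) := by
  intro D u w huw
  obtain ⟨t, ht, huniq⟩ :=
    (PreservesValue.subtype (C.prod B) (pullbackLocus f π)).existsUnique_comp_eq (u.prod w)
      fun x => ⟨⟨(u.f x, w.f x), congr_f huw x⟩, rfl⟩
  refine ⟨t, ⟨hom_ext fun x => ?_, hom_ext fun x => ?_⟩, fun t' h => huniq t' (hom_ext fun x => ?_)⟩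
  · exact congrArg Prod.fst (congr_f ht x)
  · exact congrArg Prod.snd (congr_f ht x)
  · exact Prod.ext (congr_f h.1 x) (congr_f h.2 x)

theorem LiftsValue.pullbackFst {π : ValHom B A} (hπ : π.LiftsValue) (f : ValHom C A) :
    (pullbackFst f π).LiftsValue := by
  intro c
  obtain ⟨b, hb, hv⟩ := hπ (f.f c)
  refine ⟨⟨(c, b), hb.symm⟩, rfl, ?_⟩
  change min (C.v c) (B.v b) = C.v c
  exact min_eq_left (hv ▸ f.le c)

end Pullback

end ValHom

theorem IsKernelMor.exists_pushout {ι : ValHom A B} (hι : IsKernelMor ι) (f : ValHom A C) :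
    ∃ (P : ValGroup p n) (ι' : ValHom C P) (f' : ValHom B P),
      ι'.comp f = f'.comp ι ∧ IsKernelMor ι' ∧ PushoutProperty ι f f' ι' :=
  ⟨pushout ι f, pushoutInr ι f, pushoutInl ι f, pushout_condition ι f,
    isKernelMor_iff.2 ((isKernelMor_iff.1 hι).pushoutInr f), pushoutProperty_pushout ι f⟩

theorem IsCokernelMor.exists_pullback {π : ValHom B A} (hπ : IsCokernelMor π) (f : ValHom C A) :
    ∃ (P : ValGroup p n) (π' : ValHom P C) (f' : ValHom P B),
      f.comp π' = π.comp f' ∧ IsCokernelMor π' ∧ PullbackProperty f π π' f' :=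
  ⟨pullback f π, pullbackFst f π, pullbackSnd f π, pullback_condition f π,
    isCokernelMor_iff.2 ((isCokernelMor_iff.1 hπ).pullbackFst f), pullbackProperty_pullback f π⟩

end PVal

open PVal in
theorem vpn_quasiAbelian_general (p n : ℕ) (hn : 1 ≤ n) :
    (∀ (A B : ValGroup p n) (φ : ValHom A B),
      ∃ (K : ValGroup p n) (ι : ValHom K A), IsKernelOf ι φ) ∧
    (∀ (A B : ValGroup p n) (φ : ValHom A B),
      ∃ (Q : ValGroup p n) (π : ValHom B Q), IsCokernelOf π φ) ∧
    (∀ A : ValGroup p n, IsKernelMor (ValHom.id A) ∧ IsCokernelMor (ValHom.id A)) ∧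
    (∀ (A B C : ValGroup p n) (φ : ValHom A B) (ψ : ValHom B C),
      IsKernelMor φ → IsKernelMor ψ → IsKernelMor (ψ.comp φ)) ∧
    (∀ (A B C : ValGroup p n) (φ : ValHom A B) (ψ : ValHom B C),
      IsCokernelMor φ → IsCokernelMor ψ → IsCokernelMor (ψ.comp φ)) ∧
    (∀ (A B C : ValGroup p n) (ι : ValHom A B), IsKernelMor ι → ∀ f : ValHom A C,
      ∃ (P : ValGroup p n) (ι' : ValHom C P) (f' : ValHom B P),
        ι'.comp f = f'.comp ι ∧ IsKernelMor ι' ∧ ValHom.PushoutProperty ι f f' ι') ∧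
    (∀ (A B C : ValGroup p n) (π : ValHom B A), IsCokernelMor π → ∀ f : ValHom C A,
      ∃ (P : ValGroup p n) (π' : ValHom P C) (f' : ValHom P B),
        f.comp π' = π.comp f' ∧ IsCokernelMor π' ∧ ValHom.PullbackProperty f π π' f') ∧
    (∀ (A B : ValGroup p n) (φ : ValHom A B),
      (IsKernelMor φ ↔ (Function.Injective φ.f ∧ φ.PreservesValue)) ∧
      (IsKernelMor φ ↔ (Function.Injective φ.f ∧
        ∀ i : ℕ, i ≤ n → ∀ x, (i : ℕ∞) ≤ B.v (φ.f x) → (i : ℕ∞) ≤ A.v x))) ∧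
    (∀ (A B : ValGroup p n) (φ : ValHom A B),
      (IsCokernelMor φ ↔ (Function.Surjective φ.f ∧ φ.LiftsValue)) ∧
      (IsCokernelMor φ ↔
        ∀ i : ℕ, i ≤ n → ∀ y, (i : ℕ∞) ≤ B.v y → ∃ x, φ.f x = y ∧ (i : ℕ∞) ≤ A.v x)) ∧
    (∀ (A B C : ValGroup p n) (φ : ValHom A B) (ψ : ValHom B C),
      IsConflation φ ψ ↔ ∀ i : ℕ, i ≤ n → IsShortExactAt i φ ψ) :=
  ⟨fun _ _ φ => ⟨_, _, isKernelOf_subtype_ker φ⟩,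
    fun _ _ φ => ⟨_, _, isCokernelOf_quotientMap_range φ⟩,
    fun A => ⟨isKernelMor_id A, isCokernelMor_id A⟩,
    fun _ _ _ _ _ hφ hψ => hψ.comp hφ,
    fun _ _ _ _ _ hφ hψ => hψ.comp hφ,
    fun _ _ _ _ hι f => hι.exists_pushout f,
    fun _ _ _ _ hπ f => hπ.exists_pullback f,
    fun _ _ _ => ⟨isKernelMor_iff_injective_and_preservesValue,
      isKernelMor_iff_injective_and_forall_le hn⟩,
    fun _ _ _ => ⟨isCokernelMor_iff_surjective_and_liftsValue, isCokernelMor_iff_forall_exists⟩,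
    fun _ _ _ _ _ => isConflation_iff_forall_isShortExactAt hn⟩

open PVal in
/-- The category `𝒱ₚⁿ` of `p`-valuated abelian groups with valuation
bounded by `n-1` is quasi-abelian: it has kernels and cokernels, and the kernel–cokernel
pairs form an exact structure (identities are inflations/deflations, these classes are
closed under composition, pushouts of inflations along arbitrary morphisms exist and are
inflations, and dually for deflations).  Moreover the stated characterizations of kernels,
cokernels and kernel–cokernel pairs hold. -/
theorem vpn_quasiAbelian (p n : ℕ) (hp : p.Prime) (hn : 1 ≤ n) :
    -- kernels exist
    (∀ (A B : ValGroup p n) (φ : ValHom A B),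
      ∃ (K : ValGroup p n) (ι : ValHom K A), IsKernelOf ι φ) ∧
    -- cokernels exist
    (∀ (A B : ValGroup p n) (φ : ValHom A B),
      ∃ (Q : ValGroup p n) (π : ValHom B Q), IsCokernelOf π φ) ∧
    -- identities are inflations and deflations
    (∀ A : ValGroup p n, IsKernelMor (ValHom.id A) ∧ IsCokernelMor (ValHom.id A)) ∧
    -- inflations and deflations are closed under composition
    (∀ (A B C : ValGroup p n) (φ : ValHom A B) (ψ : ValHom B C),
      IsKernelMor φ → IsKernelMor ψ → IsKernelMor (ψ.comp φ)) ∧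
    (∀ (A B C : ValGroup p n) (φ : ValHom A B) (ψ : ValHom B C),
      IsCokernelMor φ → IsCokernelMor ψ → IsCokernelMor (ψ.comp φ)) ∧
    -- pushouts of inflations along arbitrary morphisms exist and are inflations
    (∀ (A B C : ValGroup p n) (ι : ValHom A B), IsKernelMor ι → ∀ f : ValHom A C,
      ∃ (P : ValGroup p n) (ι' : ValHom C P) (f' : ValHom B P),
        ι'.comp f = f'.comp ι ∧ IsKernelMor ι' ∧
        (∀ (D : ValGroup p n) (u : ValHom C D) (w : ValHom B D), u.comp f = w.comp ι →
          ∃! t : ValHom P D, t.comp ι' = u ∧ t.comp f' = w)) ∧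
    -- pullbacks of deflations along arbitrary morphisms exist and are deflations
    (∀ (A B C : ValGroup p n) (π : ValHom B A), IsCokernelMor π → ∀ f : ValHom C A,
      ∃ (P : ValGroup p n) (π' : ValHom P C) (f' : ValHom P B),
        f.comp π' = π.comp f' ∧ IsCokernelMor π' ∧
        (∀ (D : ValGroup p n) (u : ValHom D C) (w : ValHom D B), f.comp u = π.comp w →
          ∃! t : ValHom D P, π'.comp t = u ∧ f'.comp t = w)) ∧
    -- (1) characterization of kernels
    (∀ (A B : ValGroup p n) (φ : ValHom A B),
      (IsKernelMor φ ↔ (Function.Injective φ.f ∧ ∀ x, B.v (φ.f x) = A.v x)) ∧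
      (IsKernelMor φ ↔ (Function.Injective φ.f ∧
        ∀ i : ℕ, i ≤ n → ∀ x, (i : ℕ∞) ≤ B.v (φ.f x) → (i : ℕ∞) ≤ A.v x))) ∧
    -- (2) characterization of cokernels
    (∀ (A B : ValGroup p n) (φ : ValHom A B),
      (IsCokernelMor φ ↔ (Function.Surjective φ.f ∧
        ∀ y, ∃ x, φ.f x = y ∧ A.v x = B.v y)) ∧
      (IsCokernelMor φ ↔
        ∀ i : ℕ, i ≤ n → ∀ y, (i : ℕ∞) ≤ B.v y →
          ∃ x, φ.f x = y ∧ (i : ℕ∞) ≤ A.v x)) ∧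
    -- (3) characterization of kernel–cokernel pairs
    (∀ (A B C : ValGroup p n) (φ : ValHom A B) (ψ : ValHom B C),
      IsConflation φ ψ ↔
        ∀ i : ℕ, i ≤ n →
          (∀ x : A.B, (i : ℕ∞) ≤ A.v x → φ.f x = 0 → x = 0) ∧
          (∀ x : A.B, (i : ℕ∞) ≤ A.v x → ψ.f (φ.f x) = 0) ∧
          (∀ y : B.B, (i : ℕ∞) ≤ B.v y → ψ.f y = 0 →
            ∃ x : A.B, (i : ℕ∞) ≤ A.v x ∧ φ.f x = y) ∧
          (∀ z : C.B, (i : ℕ∞) ≤ C.v z →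
            ∃ y : B.B, (i : ℕ∞) ≤ B.v y ∧ ψ.f y = z)) :=
  vpn_quasiAbelian_general p n hn
end
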